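/- arXiv:1502.01288 — 2 statements merged into one kernel-verified Lean document; each statement's English description precedes it below -/
import Mathlib

section
/- (Dickson's classification) Let ℓ be an odd prime and let G be a subgroup of GL₂(F_ℓ). If ℓ divides |G|, then either G is contained in a conjugate of the Borel subgroup of upper triangular matrices, or G contains SL₂(F_ℓ). If ℓ does not divide |G|, let H be the image of G in PGL₂(F_ℓ); then either (1) H is cyclic and G is contained in a conjugate of C_sp or of C_ns, or (2) H is dihedral (generated by two distinct elements of order 2... i.e. a dihedral group) and G is contained in a conjugate of N_sp or of N_ns but not in the corresponding conjugate Cartan subgroup, or (3) H is isomorphic to A₄, S₄, or A₅. -/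
open Matrix

abbrev GL2 (ℓ : ℕ) : Type := GL (Fin 2) (ZMod ℓ)

/-- The underlying matrix of an element of `GL₂(F_ℓ)`. -/
def mat {ℓ : ℕ} (g : GL2 ℓ) : Matrix (Fin 2) (Fin 2) (ZMod ℓ) := g

/-- `g` is a diagonal matrix. -/
def IsDiag {ℓ : ℕ} (g : GL2 ℓ) : Prop := mat g 0 1 = 0 ∧ mat g 1 0 = 0

/-- `g` is an antidiagonal matrix. -/
def IsAnti {ℓ : ℕ} (g : GL2 ℓ) : Prop := mat g 0 0 = 0 ∧ mat g 1 1 = 0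

/-- `g` is a scalar matrix. -/
def IsScalar {ℓ : ℕ} (g : GL2 ℓ) : Prop :=
  ∃ c : ZMod ℓ, mat g = c • (1 : Matrix (Fin 2) (Fin 2) (ZMod ℓ))

/-- Membership in the split Cartan subgroup `C_sp` (the diagonal matrices). -/
def InCsp {ℓ : ℕ} (g : GL2 ℓ) : Prop := IsDiag g

/-- Membership in the normalizer `N_sp` of the split Cartan (diagonal or antidiagonal). -/
def InNsp {ℓ : ℕ} (g : GL2 ℓ) : Prop := IsDiag g ∨ IsAnti g

/-- Membership in the nonsplit Cartan `C_ns` w.r.t. the nonresidue `δ`: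
matrices of the form `[[a, δb], [b, a]]`. -/
def InCns {ℓ : ℕ} (δ : ZMod ℓ) (g : GL2 ℓ) : Prop :=
  mat g 1 1 = mat g 0 0 ∧ mat g 0 1 = δ * mat g 1 0

/-- Membership in `N_ns \ C_ns` (as a matrix shape): `[[a, -δb], [b, -a]]`. -/
def InNnsAnti {ℓ : ℕ} (δ : ZMod ℓ) (g : GL2 ℓ) : Prop :=
  mat g 1 1 = - mat g 0 0 ∧ mat g 0 1 = - (δ * mat g 1 0)

/-- Membership in the normalizer `N_ns` of the nonsplit Cartan. -/
def InNns {ℓ : ℕ} (δ : ZMod ℓ) (g : GL2 ℓ) : Prop := InCns δ g ∨ InNnsAnti δ g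

/-- `PGL₂(F_ℓ)`: the quotient of `GL₂(F_ℓ)` by its center (the scalar matrices). -/
abbrev PGL2 (ℓ : ℕ) : Type := GL2 ℓ ⧸ Subgroup.center (GL2 ℓ)

/-- The natural projection `GL₂(F_ℓ) →* PGL₂(F_ℓ)`. -/
def toPGL (ℓ : ℕ) : GL2 ℓ →* PGL2 ℓ := QuotientGroup.mk' _

/-- The image of a subgroup of `GL₂(F_ℓ)` in `PGL₂(F_ℓ)`. -/
def projImage {ℓ : ℕ} (G : Subgroup (GL2 ℓ)) : Subgroup (PGL2 ℓ) := G.map (toPGL ℓ)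

/-- `H` is isomorphic to the alternating group `A₄`. -/
def IsA4 {ℓ : ℕ} (H : Subgroup (PGL2 ℓ)) : Prop := Nonempty (H ≃* alternatingGroup (Fin 4))

/-- `H` is isomorphic to the symmetric group `S₄`. -/
def IsS4 {ℓ : ℕ} (H : Subgroup (PGL2 ℓ)) : Prop := Nonempty (H ≃* Equiv.Perm (Fin 4))

/-- `H` is isomorphic to the alternating group `A₅`. -/
def IsA5 {ℓ : ℕ} (H : Subgroup (PGL2 ℓ)) : Prop := Nonempty (H ≃* alternatingGroup (Fin 5))

/-- `g` is an upper triangular matrix (membership in the standard Borel subgroup). -/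
def IsUpperTri {ℓ : ℕ} (g : GL2 ℓ) : Prop := mat g 1 0 = 0

/-- `H` is a dihedral group: generated by two distinct elements of order 2. -/
def IsDihedralSub {ℓ : ℕ} (H : Subgroup (PGL2 ℓ)) : Prop :=
  ∃ a b : PGL2 ℓ, a ≠ b ∧ orderOf a = 2 ∧ orderOf b = 2 ∧ Subgroup.closure {a, b} = H

namespace Dickson

lemma alt_of_inj {H α : Type*} [Group H] [Finite H] [Finite α] (k : ℕ) (hk : Nat.card α = k)
    (f : H →* Equiv.Perm α) (hf : Function.Injective f) (hc : Nat.card H * 2 = k.factorial) :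
    Nonempty (H ≃* alternatingGroup (Fin k)) := by
  classical
  have := Fintype.ofFinite α
  have e : α ≃ Fin k := Finite.equivFinOfCardEq hk
  let F : H →* Equiv.Perm (Fin k) := (e.permCongrHom.toMonoidHom).comp f
  have hF : Function.Injective F := e.permCongrHom.injective.comp hf
  have h1 : Nat.card F.range = Nat.card H := (Nat.card_congr (MonoidHom.ofInjective hF).toEquiv).symm
  have h2 : F.range.index = 2 := by
    have h3 := F.range.card_mul_index
    rw [h1, Nat.card_perm, Nat.card_fin, ← hc] at h3
    exact Nat.eq_of_mul_eq_mul_left Nat.card_pos h3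
  have h4 := Equiv.Perm.eq_alternatingGroup_of_index_eq_two h2
  exact ⟨(MonoidHom.ofInjective hF).trans (MulEquiv.subgroupCongr h4)⟩

lemma sym_of_inj {H α : Type*} [Group H] [Finite H] [Finite α] (k : ℕ) (hk : Nat.card α = k)
    (f : H →* Equiv.Perm α) (hf : Function.Injective f) (hc : Nat.card H = k.factorial) :
    Nonempty (H ≃* Equiv.Perm (Fin k)) := by
  classical
  have := Fintype.ofFinite α
  have e : α ≃ Fin k := Finite.equivFinOfCardEq hk
  let F : H →* Equiv.Perm (Fin k) := (e.permCongrHom.toMonoidHom).comp f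
  have hF : Function.Injective F := e.permCongrHom.injective.comp hf
  have hb : Function.Bijective F := by
    refine (Nat.bijective_iff_injective_and_card F).2 ⟨hF, ?_⟩
    rw [hc, Nat.card_perm, Nat.card_fin]
  exact ⟨MulEquiv.ofBijective F hb⟩

/-- commutator trick -/
lemma comm_of_disjoint {H : Type*} [Group H] (N P : Subgroup H) [N.Normal] (hd : N ⊓ P = ⊥)
    {z g : H} (hz : z ∈ N) (hzP : z ∈ Subgroup.normalizer (P : Set H)) (hg : g ∈ P) : z * g = g * z := by
  have h1 : z * g * z⁻¹ * g⁻¹ ∈ N ⊓ P := by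
    refine ⟨?_, ?_⟩
    · have := N.mul_mem hz ((inferInstance : N.Normal).conj_mem _ (N.inv_mem hz) g)
      have e : z * (g * z⁻¹ * g⁻¹) = z * g * z⁻¹ * g⁻¹ := by group
      exact e ▸ this
    · exact P.mul_mem ((Subgroup.mem_normalizer_iff.1 hzP g).1 hg) (P.inv_mem hg)
  rw [hd, Subgroup.mem_bot] at h1
  have := mul_inv_eq_one.1 h1
  exact mul_inv_eq_iff_eq_mul.1 this

lemma s4_of {H : Type*} [Group H] [Finite H] (hc : Nat.card H = 24) (h6 : ∀ h : H, orderOf h ≠ 6)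
    (hs : Nat.card (Sylow 3 H) ≠ 1) : Nonempty (H ≃* Equiv.Perm (Fin 4)) := by
  have f3 : Fact (Nat.Prime 3) := ⟨Nat.prime_three⟩
  have hcardP : ∀ P : Sylow 3 H, Nat.card P = 3 := by
    intro P
    rw [P.card_eq_multiplicity, hc]
    have : Nat.factorization 24 3 = 1 := by
      rw [show (24:ℕ) = 3 * 8 by norm_num, Nat.factorization_mul (by norm_num) (by norm_num)]
      simp [Nat.prime_three.factorization, Nat.factorization_eq_zero_of_not_dvd]
    rw [this]; norm_num
  have h4 : Nat.card (Sylow 3 H) = 4 := by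
    obtain ⟨P⟩ : Nonempty (Sylow 3 H) := inferInstance
    have h1 := P.card_dvd_index
    have h2 := card_sylow_modEq_one 3 H
    have h3 : P.index = 8 := by
      have := (P : Subgroup H).card_mul_index
      rw [hc, show Nat.card (P : Subgroup H) = 3 from hcardP P] at this
      omega
    rw [h3] at h1
    have h5 := Nat.le_of_dvd (by norm_num) h1
    generalize Nat.card (Sylow 3 H) = s at *
    unfold Nat.ModEq at h2
    interval_cases s <;> simp_all
  let f := MulAction.toPermHom H (Sylow 3 H)
  have hmem : ∀ z, z ∈ f.ker → ∀ P : Sylow 3 H, z ∈ Subgroup.normalizer (P : Set H) := by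
    intro z hz P
    rw [← Sylow.smul_eq_iff_mem_normalizer]
    exact congrArg (fun e => e P) (MonoidHom.mem_ker.1 hz)
  have no3 : ∀ z, z ∈ f.ker → orderOf z ≠ 3 := by
    intro z hz ho
    have hzP : IsPGroup 3 (Subgroup.zpowers z) := by
      apply IsPGroup.of_card (n := 1); rw [Nat.card_zpowers, ho]; norm_num
    have hle : ∀ P : Sylow 3 H, Subgroup.zpowers z = (P : Subgroup H) := by
      intro P
      have h1 := hzP.inf_normalizer_sylow P
      have h2 : Subgroup.zpowers z ≤ Subgroup.normalizer (P : Set H) := by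
        rw [Subgroup.zpowers_le]; exact hmem z hz P
      have h3 : Subgroup.zpowers z ≤ (P : Subgroup H) := by
        rw [inf_eq_left.2 h2] at h1; exact inf_eq_left.1 h1.symm
      apply Subgroup.eq_of_le_of_card_ge h3
      rw [Nat.card_zpowers, ho]; exact (hcardP P).le
    apply hs
    rw [Nat.card_eq_one_iff_unique]
    exact ⟨⟨fun P Q => Sylow.ext ((hle P).symm.trans (hle Q))⟩, inferInstance⟩
  have hdisj : ∀ P : Sylow 3 H, f.ker ⊓ (P : Subgroup H) = ⊥ := by
    intro P
    rw [eq_bot_iff]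
    intro x hx
    by_contra hne
    have h1 : orderOf x ∣ 3 := by
      rw [← hcardP P]; exact Subgroup.orderOf_dvd_natCard (P : Subgroup H) hx.2
    rcases (Nat.dvd_prime Nat.prime_three).1 h1 with h | h
    · exact hne (orderOf_eq_one_iff.1 h)
    · exact no3 x hx.1 h
  have no2 : ∀ z, z ∈ f.ker → orderOf z ≠ 2 := by
    intro z hz ho
    obtain ⟨P⟩ : Nonempty (Sylow 3 H) := inferInstance
    obtain ⟨g, hg⟩ := exists_prime_orderOf_dvd_card' (G := P) 3 (by rw [hcardP P])
    have h1 := comm_of_disjoint f.ker P (hdisj P) hz (hmem z hz P) g.2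
    have h2 : orderOf (g : H) = 3 := by exact (orderOf_injective (P : Subgroup H).subtype (Subgroup.subtype_injective _) g).trans hg
    have h3 : orderOf (z * g) = 6 := by
      have : Commute z (g : H) := h1
      rw [this.orderOf_mul_eq_mul_orderOf_of_coprime (by rw [ho, h2]; norm_num), ho, h2]
    exact h6 _ h3
  have hker : f.ker = ⊥ := by
    by_contra hne
    have h1 : Nat.card f.ker ≠ 1 := fun h => hne (Subgroup.card_eq_one.1 h)
    obtain ⟨p, hp, hpd⟩ := Nat.exists_prime_and_dvd h1
    have : Fact p.Prime := ⟨hp⟩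
    obtain ⟨z, hz⟩ := exists_prime_orderOf_dvd_card' (G := f.ker) p hpd
    have hz' : orderOf (z : H) = p := by
      rw [← hz]; exact orderOf_injective f.ker.subtype (Subgroup.subtype_injective _) z
    have h2 : p ∣ 24 := by rw [← hc, ← hz']; exact orderOf_dvd_natCard _
    have h3 : p ∣ 2 ∨ p ∣ 3 := by
      have : p ∣ 2 ^ 3 * 3 := by simpa using h2
      rcases hp.dvd_mul.1 this with h | h
      · exact Or.inl (hp.dvd_of_dvd_pow h)
      · exact Or.inr h
    rcases h3 with h | h
    · exact no2 z z.2 (by rw [hz', (Nat.prime_dvd_prime_iff_eq hp Nat.prime_two).1 h])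
    · exact no3 z z.2 (by rw [hz', (Nat.prime_dvd_prime_iff_eq hp Nat.prime_three).1 h])
  exact sym_of_inj 4 h4 f ((MonoidHom.ker_eq_bot_iff f).1 hker) (by rw [hc]; rfl)

lemma a5_of {H : Type*} [Group H] [Finite H] (hc : Nat.card H = 60)
    (ho : ∀ h : H, h ≠ 1 → orderOf h ≠ 4)
    (hcent : ∀ z : H, orderOf z = 2 → Nat.card (Subgroup.centralizer {z}) ≤ 4)
    (hconj : ∀ z z' : H, orderOf z = 2 → orderOf z' = 2 → ∃ h, z' = h * z * h⁻¹) :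
    Nonempty (H ≃* alternatingGroup (Fin 5)) := by
  have f2 : Fact (Nat.Prime 2) := ⟨Nat.prime_two⟩
  have hcardP : ∀ P : Sylow 2 H, Nat.card P = 4 := by
    intro P
    rw [P.card_eq_multiplicity, hc]
    have : Nat.factorization 60 2 = 2 := by
      rw [show (60:ℕ) = 2 * (2 * 15) by norm_num, Nat.factorization_mul (by norm_num) (by norm_num),
        Nat.factorization_mul (by norm_num) (by norm_num)]
      simp [Nat.prime_two.factorization, Nat.factorization_eq_zero_of_not_dvd]
    rw [this]; norm_num
  have hord : ∀ (P : Sylow 2 H) (x : H), x ∈ (P : Subgroup H) → x ≠ 1 → orderOf x = 2 := by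
    intro P x hx hne
    have h1 : orderOf x ∣ 2 ^ 2 := by
      rw [show 2 ^ 2 = Nat.card P by rw [hcardP]; rfl]; exact Subgroup.orderOf_dvd_natCard (P : Subgroup H) hx
    obtain ⟨k, hk, hk'⟩ := (Nat.dvd_prime_pow Nat.prime_two).1 h1
    interval_cases k
    · exact absurd (orderOf_eq_one_iff.1 (by simpa using hk')) hne
    · simpa using hk'
    · exact absurd (by simpa using hk') (ho x hne)
  have hcentP : ∀ (P : Sylow 2 H) (x : H), x ∈ (P : Subgroup H) → x ≠ 1 →
      Subgroup.centralizer {x} = (P : Subgroup H) := by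
    intro P x hx hne
    symm
    apply Subgroup.eq_of_le_of_card_ge
    · intro y hy
      rw [Subgroup.mem_centralizer_singleton_iff]
      have := IsPGroup.isMulCommutative_of_card_eq_prime_sq (p := 2) (G := P) (by rw [hcardP]; rfl)
      have := mul_comm' (⟨x, hx⟩ : P) ⟨y, hy⟩
      simpa [Subtype.ext_iff, eq_comm] using this
    · rw [show Nat.card (P : Subgroup H) = 4 from hcardP P]
      exact hcent x (hord P x hx hne)
  have hnorm : ∀ P : Sylow 2 H, Nat.card (Subgroup.normalizer (P : Set H)) = 12 := by
    intro P
    obtain ⟨g, hg⟩ := exists_prime_orderOf_dvd_card' (G := P) 2 (by rw [hcardP P]; norm_num)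
    obtain ⟨z, hz⟩ := g
    have hz2 : orderOf z = 2 :=
      (orderOf_injective (P : Subgroup H).subtype (Subgroup.subtype_injective _) ⟨z, hz⟩).trans hg
    have hz1 : z ≠ 1 := by rintro rfl; simp at hz2
    set N := Subgroup.normalizer (P : Set H) with hN
    let _ : MulAction N H := MulAction.compHom H ((MulAut.conj : H →* MulAut H).comp N.subtype)
    have hact : ∀ (n : N) (x : H), n • x = n * x * (n : H)⁻¹ := fun n x => rfl
    have horb : MulAction.orbit N z = (P : Set H) \ {1} := by
      ext x
      constructor
      · rintro ⟨n, rfl⟩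
        simp only [hact]
        refine ⟨(Subgroup.mem_normalizer_iff.1 n.2 z).1 hz, ?_⟩
        simpa using hz1
      · rintro ⟨hx, hx1⟩
        have hx1 : x ≠ 1 := hx1
        obtain ⟨h, rfl⟩ := hconj z x hz2 (hord P x hx hx1)
        refine ⟨⟨h, ?_⟩, rfl⟩
        refine (Subgroup.mem_normalizer_iff (H := (P : Subgroup H))).2 ?_
        intro y
        have e1 := hcentP P z hz hz1
        have e2 := hcentP P _ hx hx1
        have e1' : y ∈ P ↔ y ∈ Subgroup.centralizer {z} := by rw [e1]; rfl
        have e2' : h * y * h⁻¹ ∈ P ↔ h * y * h⁻¹ ∈ Subgroup.centralizer {h * z * h⁻¹} := by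
          rw [e2]; rfl
        change y ∈ P ↔ h * y * h⁻¹ ∈ P
        rw [e1', e2', Subgroup.mem_centralizer_singleton_iff, Subgroup.mem_centralizer_singleton_iff]
        constructor
        · intro e
          calc _ = h * (y * z) * h⁻¹ := by group
            _ = _ := by rw [e]; group
        · intro e
          have : h * (y * z) * h⁻¹ = h * (z * y) * h⁻¹ := by
            calc _ = h * y * h⁻¹ * (h * z * h⁻¹) := by group
              _ = _ := by rw [e]; group
          simpa using this
    have hstab : MulAction.stabilizer N z = (P : Subgroup H).subgroupOf N := by
      ext n
      rw [MulAction.mem_stabilizer_iff, Subgroup.mem_subgroupOf, hact, ← hcentP P z hz hz1,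
        Subgroup.mem_centralizer_singleton_iff, mul_inv_eq_iff_eq_mul]
    have h1 := MulAction.index_stabilizer N z
    have h2 := (MulAction.stabilizer N z).card_mul_index
    have h3 : Nat.card (MulAction.stabilizer N z) = 4 := by
      have hle : (P : Subgroup H) ≤ N := Subgroup.le_normalizer (H := (P : Subgroup H))
      rw [hstab, Nat.card_congr (Subgroup.subgroupOfEquivOfLe hle).toEquiv]
      exact hcardP P
    have h4 : ((P : Set H) \ {1}).ncard = 3 := by
      rw [Set.ncard_sdiff_singleton_of_mem (one_mem P)]
      have : (P : Set H).ncard = 4 := by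
        rw [← Nat.card_coe_set_eq]; exact hcardP P
      omega
    rw [h1, h3, horb, h4] at h2
    omega
  have h5 : Nat.card (Sylow 2 H) = 5 := by
    obtain ⟨P⟩ : Nonempty (Sylow 2 H) := inferInstance
    have h1 := P.card_eq_index_normalizer
    have h2 := (Subgroup.normalizer (P : Set H)).card_mul_index
    rw [hnorm P, hc] at h2
    rw [h1]; omega
  let f := MulAction.toPermHom H (Sylow 2 H)
  have hmem : ∀ z, z ∈ f.ker → ∀ P : Sylow 2 H, z ∈ Subgroup.normalizer (P : Set H) := by
    intro z hz P
    rw [← Sylow.smul_eq_iff_mem_normalizer]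
    exact congrArg (fun e => e P) (MonoidHom.mem_ker.1 hz)
  have no2 : ∀ z, z ∈ f.ker → orderOf z ≠ 2 := by
    intro z hz ho
    have hz1 : z ≠ 1 := by rintro rfl; simp at ho
    have hzP : IsPGroup 2 (Subgroup.zpowers z) := by
      apply IsPGroup.of_card (n := 1); rw [Nat.card_zpowers, ho]; norm_num
    have hle : ∀ P : Sylow 2 H, Subgroup.centralizer {z} = (P : Subgroup H) := by
      intro P
      have h1 := hzP.inf_normalizer_sylow P
      have h2 : Subgroup.zpowers z ≤ Subgroup.normalizer (P : Set H) := by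
        rw [Subgroup.zpowers_le]; exact hmem z hz P
      have h3 : Subgroup.zpowers z ≤ (P : Subgroup H) := by
        rw [inf_eq_left.2 h2] at h1; exact inf_eq_left.1 h1.symm
      exact hcentP P z (h3 (Subgroup.mem_zpowers z)) hz1
    have : Nat.card (Sylow 2 H) = 1 := by
      rw [Nat.card_eq_one_iff_unique]
      exact ⟨⟨fun P Q => Sylow.ext ((hle P).symm.trans (hle Q))⟩, inferInstance⟩
    omega
  have hdisj : ∀ P : Sylow 2 H, f.ker ⊓ (P : Subgroup H) = ⊥ := by
    intro P
    rw [eq_bot_iff]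
    intro x hx
    by_contra hne
    exact no2 x hx.1 (hord P x hx.2 hne)
  have hker : f.ker = ⊥ := by
    rw [eq_bot_iff]
    intro x hx
    obtain ⟨P⟩ : Nonempty (Sylow 2 H) := inferInstance
    obtain ⟨g, hg⟩ := exists_prime_orderOf_dvd_card' (G := P) 2 (by rw [hcardP P]; norm_num)
    have hg1 : (g : H) ≠ 1 := by
      intro h
      have : g = 1 := Subtype.ext h
      rw [this] at hg; simp at hg
    have h1 := comm_of_disjoint f.ker P (hdisj P) hx (hmem x hx P) g.2
    have h2 : x ∈ Subgroup.centralizer {(g : H)} := by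
      rw [Subgroup.mem_centralizer_singleton_iff]; exact h1
    rw [hcentP P g g.2 hg1] at h2
    rw [← hdisj P]; exact ⟨hx, h2⟩
  exact alt_of_inj 5 h5 f ((MonoidHom.ker_eq_bot_iff f).1 hker) (by rw [hc]; rfl)
end Dickson

namespace Dickson
open MulAction

lemma orb_stab {H X : Type*} [Group H] [Finite H] [MulAction H X] (x : X) :
    (orbit H x).ncard * Nat.card (stabilizer H x) = Nat.card H := by
  rw [← index_stabilizer H x, mul_comm]; exact (stabilizer H x).card_mul_index

lemma two_le_stab {H X : Type*} [Group H] [Finite H] [MulAction H X] (x : X)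
    (hx : ∃ h : H, h ≠ 1 ∧ h • x = x) : 2 ≤ Nat.card (stabilizer H x) := by
  obtain ⟨h, h1, h2⟩ := hx
  have : Nontrivial (stabilizer H x) := ⟨⟨h, h2⟩, 1, fun e => h1 (congrArg Subtype.val e)⟩
  exact Finite.one_lt_card

lemma count {H X : Type*} [Group H] [Finite H] [MulAction H X] [Nonempty X]
    (h2 : ∀ h : H, h ≠ 1 → ∃ x y : X, x ≠ y ∧ ∀ z, h • z = z ↔ z = x ∨ z = y) :
    (∃ x : X, ∀ h : H, h • x = x) ∨ ∃ x1 x2 x3 : X,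
      (∀ z : X, (∃ h : H, h ≠ 1 ∧ h • z = z) →
        orbit H z = orbit H x1 ∨ orbit H z = orbit H x2 ∨ orbit H z = orbit H x3) ∧
      2 ≤ Nat.card (stabilizer H x1) ∧ 2 ≤ Nat.card (stabilizer H x2) ∧
      2 ≤ Nat.card (stabilizer H x3) ∧
      (orbit H x1).ncard + (orbit H x2).ncard + (orbit H x3).ncard = Nat.card H + 2 := by
  classical
  have := Fintype.ofFinite H
  by_cases hn : Nat.card H = 1
  · left
    obtain ⟨x⟩ := ‹Nonempty X›
    have := (Nat.card_eq_one_iff_unique.1 hn).1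
    exact ⟨x, fun h => by rw [Subsingleton.elim h 1, one_smul]⟩
  have hn1 : 1 < Nat.card H := by have := Nat.card_pos (α := H); omega
  let S : Set X := {z | ∃ h : H, h ≠ 1 ∧ h • z = z}
  have hSfin : S.Finite := by
    have : S ⊆ ⋃ h ∈ {h : H | h ≠ 1}, {z : X | h • z = z} := by
      rintro z ⟨h, h1, h3⟩
      simp only [Set.mem_iUnion]; exact ⟨h, h1, h3⟩
    refine Set.Finite.subset (Set.Finite.biUnion (Set.toFinite _) ?_) this
    intro h hh
    obtain ⟨x, y, -, hxy⟩ := h2 h hh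
    refine Set.Finite.subset (Set.toFinite {x, y}) ?_
    intro z hz; exact (hxy z).1 hz
  let Sf := hSfin.toFinset
  have hSf : ∀ z, z ∈ Sf ↔ ∃ h : H, h ≠ 1 ∧ h • z = z := fun z => hSfin.mem_toFinset
  let T : Finset (Set X) := Sf.image (orbit H)
  have hsmulS : ∀ z ∈ Sf, ∀ w, orbit H w = orbit H z → w ∈ Sf := by
    intro z hz w hw
    have : w ∈ orbit H z := by rw [← hw]; exact mem_orbit_self w
    obtain ⟨k, rfl⟩ := this
    obtain ⟨h, h1, h3⟩ := (hSf z).1 hz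
    refine (hSf _).2 ⟨k * h * k⁻¹, by simpa using h1, ?_⟩
    simp only [mul_smul, inv_smul_smul, h3]
  have hfib : ∀ z ∈ Sf, ∀ w, w ∈ Sf.filter (fun w => orbit H w = orbit H z) ↔ w ∈ orbit H z := by
    intro z hz w
    rw [Finset.mem_filter, orbit_eq_iff]
    exact ⟨fun h => h.2, fun h => ⟨hsmulS z hz w (orbit_eq_iff.2 h), h⟩⟩
  have hcardS : Sf.card = ∑ o ∈ T, o.ncard := by
    rw [Finset.card_eq_sum_card_fiberwise (f := orbit H) (t := T)
      (fun x hx => Finset.mem_image_of_mem _ hx)]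
    refine Finset.sum_congr rfl ?_
    intro o ho
    obtain ⟨z, hz, rfl⟩ := Finset.mem_image.1 ho
    rw [← Set.ncard_coe_finset]
    congr 1
    ext w; exact hfib z hz w
  have hsum1 : ∑ x ∈ Sf, Nat.card (stabilizer H x) = T.card * Nat.card H := by
    rw [← Finset.sum_fiberwise_of_maps_to (g := orbit H) (t := T)
      (fun x hx => Finset.mem_image_of_mem _ hx), Finset.card_eq_sum_ones, Finset.sum_mul]
    refine Finset.sum_congr rfl ?_
    intro o ho
    obtain ⟨z, hz, rfl⟩ := Finset.mem_image.1 ho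
    have hst : ∀ w ∈ Sf.filter (fun w => orbit H w = orbit H z),
        Nat.card (stabilizer H w) = Nat.card (stabilizer H z) := by
      intro w hw
      have e1 := orb_stab (H := H) w
      have e2 := orb_stab (H := H) z
      rw [(Finset.mem_filter.1 hw).2, ← e2] at e1
      refine Nat.eq_of_mul_eq_mul_left ?_ e1
      rcases Nat.eq_zero_or_pos (orbit H z).ncard with h | h
      · rw [h] at e2; omega
      · exact h
    rw [Finset.sum_congr rfl hst, Finset.sum_const, one_mul, ← orb_stab (H := H) z, smul_eq_mul]
    congr 1
    rw [← Set.ncard_coe_finset]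
    congr 1
    ext w; exact hfib z hz w
  have hsum2 : ∑ x ∈ Sf, Nat.card (stabilizer H x) = Sf.card + 2 * (Nat.card H - 1) := by
    have e1 : ∀ x ∈ Sf, Nat.card (stabilizer H x) = (Finset.univ.filter (fun h : H => h • x = x)).card := by
      intro x _
      have e : ((Finset.univ.filter (fun h : H => h • x = x) : Finset H) : Set H) = stabilizer H x := by
        ext h; simp [mem_stabilizer_iff]
      rw [← Set.ncard_coe_finset, e, ← Nat.card_coe_set_eq]
      rfl
    rw [Finset.sum_congr rfl e1]
    have e2 := Finset.sum_card_bipartiteAbove_eq_sum_card_bipartiteBelow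
      (s := Sf) (t := (Finset.univ : Finset H)) (fun x h => h • x = x)
    unfold Finset.bipartiteAbove Finset.bipartiteBelow at e2
    rw [e2, ← Finset.add_sum_erase _ _ (Finset.mem_univ (1 : H))]
    congr 1
    · simp
    · rw [Finset.sum_congr rfl (g := fun _ => 2), Finset.sum_const, smul_eq_mul, mul_comm,
        Finset.card_erase_of_mem (Finset.mem_univ _), Finset.card_univ, Nat.card_eq_fintype_card]
      intro h hh
      have hh1 := Finset.ne_of_mem_erase hh
      obtain ⟨x, y, hne, hxy⟩ := h2 h hh1
      rw [← Finset.card_pair hne]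
      congr 1
      ext z
      rw [Finset.mem_filter, Finset.mem_insert, Finset.mem_singleton]
      change z ∈ Sf ∧ h • z = z ↔ _
      rw [hxy]
      exact ⟨fun k => k.2, fun k => ⟨(hSf z).2 ⟨h, hh1, (hxy z).2 k⟩, k⟩⟩
  have key : ∑ o ∈ T, o.ncard + 2 * (Nat.card H - 1) = T.card * Nat.card H := by
    rw [← hcardS, ← hsum2, hsum1]
  have hT : ∀ o ∈ T, ∃ x, o = orbit H x ∧ 2 ≤ Nat.card (stabilizer H x) ∧ 1 ≤ o.ncard ∧
      2 * o.ncard ≤ Nat.card H := by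
    intro o ho
    obtain ⟨z, hz, rfl⟩ := Finset.mem_image.1 ho
    have e1 := orb_stab (H := H) z
    have e2 := two_le_stab z ((hSf z).1 hz)
    refine ⟨z, rfl, e2, ?_, by nlinarith⟩
    rcases Nat.eq_zero_or_pos (orbit H z).ncard with h | h
    · rw [h] at e1; omega
    · exact h
  have hlow : T.card ≤ ∑ o ∈ T, o.ncard := by
    rw [Finset.card_eq_sum_ones]
    exact Finset.sum_le_sum fun o ho => (hT o ho).choose_spec.2.2.1
  have hup : 2 * ∑ o ∈ T, o.ncard ≤ T.card * Nat.card H := by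
    rw [Finset.mul_sum, ← smul_eq_mul (a := T.card), ← Finset.sum_const]
    exact Finset.sum_le_sum fun o ho => (hT o ho).choose_spec.2.2.2
  have hc3 : T.card ≤ 3 := by
    by_contra hcon
    have : 4 * Nat.card H ≤ T.card * Nat.card H := Nat.mul_le_mul_right _ (by omega)
    omega
  have hc2 : T.card = 2 ∨ T.card = 3 := by
    generalize T.card = t at *
    interval_cases t
    · omega
    · omega
    · left; rfl
    · right; rfl
  rcases hc2 with hc | hc
  · left
    obtain ⟨o1, o2, hne, hTe⟩ := Finset.card_eq_two.1 hc
    rw [hc, hTe, Finset.sum_pair hne] at key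
    obtain ⟨x, rfl, h3, h4, h5⟩ := hT o1 (by rw [hTe]; simp)
    obtain ⟨y, rfl, h3', h4', h5'⟩ := hT o2 (by rw [hTe]; simp)
    have : (orbit H x).ncard = 1 := by omega
    obtain ⟨a, ha⟩ := Set.ncard_eq_one.1 this
    refine ⟨x, fun h => ?_⟩
    have e1 : x ∈ orbit H x := mem_orbit_self x
    have e2 : h • x ∈ orbit H x := mem_orbit x h
    rw [ha] at e1 e2
    exact (Set.mem_singleton_iff.1 e2).trans (Set.mem_singleton_iff.1 e1).symm
  · right
    obtain ⟨o1, o2, o3, h12, h13, h23, hTe⟩ := Finset.card_eq_three.1 hc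
    rw [hc, hTe, Finset.sum_insert (by simp [h12, h13]), Finset.sum_pair h23] at key
    obtain ⟨x1, rfl, h3, -⟩ := hT o1 (by rw [hTe]; simp)
    obtain ⟨x2, rfl, h4, -⟩ := hT o2 (by rw [hTe]; simp)
    obtain ⟨x3, rfl, h5, -⟩ := hT o3 (by rw [hTe]; simp)
    refine ⟨x1, x2, x3, ?_, h3, h4, h5, by omega⟩
    intro z hz
    have : orbit H z ∈ T := Finset.mem_image_of_mem _ ((hSf z).2 hz)
    rw [hTe] at this
    simpa using this

lemma numeric {n p q r e f g : ℕ} (hp : p * e = n) (hq : q * f = n) (hr : r * g = n)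
    (hs : p + q + r = n + 2) (he : 2 ≤ e) (hef : e ≤ f) (hfg : f ≤ g) :
    (r = 2) ∨ (e = 2 ∧ f = 3 ∧ g = 3 ∧ n = 12) ∨ (e = 2 ∧ f = 3 ∧ g = 4 ∧ n = 24) ∨
      (e = 2 ∧ f = 3 ∧ g = 5 ∧ n = 60) := by
  have hn : 0 < n := by
    rcases Nat.eq_zero_or_pos n with h | h
    · subst h
      have : p = 0 := by rcases Nat.mul_eq_zero.1 hp with h | h <;> omega
      have : q = 0 := by rcases Nat.mul_eq_zero.1 hq with h | h <;> omega
      have : r = 0 := by rcases Nat.mul_eq_zero.1 hr with h | h <;> omega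
      omega
    · exact h
  have hqp : q ≤ p := by
    by_contra hc
    have : p * e < q * f := Nat.mul_lt_mul_of_lt_of_le (by omega) hef (by omega)
    omega
  have hrq : r ≤ q := by
    by_contra hc
    have : q * f < r * g := Nat.mul_lt_mul_of_lt_of_le (by omega) hfg (by omega)
    omega
  have he2 : e = 2 := by
    by_contra hc
    have : p * 3 ≤ p * e := Nat.mul_le_mul_left _ (by omega)
    omega
  subst he2
  have hf : f < 4 := by
    by_contra hc
    have : q * 4 ≤ q * f := Nat.mul_le_mul_left _ (by omega)
    omega
  interval_cases f
  · left; omega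
  · right
    have hg : g < 6 := by
      by_contra hc
      have : r * 6 ≤ r * g := Nat.mul_le_mul_left _ (by omega)
      omega
    interval_cases g <;> omega

/-- sorted version of `count` -/
lemma count' {H X : Type*} [Group H] [Finite H] [MulAction H X] [Nonempty X]
    (h2 : ∀ h : H, h ≠ 1 → ∃ x y : X, x ≠ y ∧ ∀ z, h • z = z ↔ z = x ∨ z = y) :
    (∃ x : X, ∀ h : H, h • x = x) ∨ ∃ x1 x2 x3 : X,
      (∀ z : X, (∃ h : H, h ≠ 1 ∧ h • z = z) →
        orbit H z = orbit H x1 ∨ orbit H z = orbit H x2 ∨ orbit H z = orbit H x3) ∧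
      2 ≤ Nat.card (stabilizer H x1) ∧
      Nat.card (stabilizer H x1) ≤ Nat.card (stabilizer H x2) ∧
      Nat.card (stabilizer H x2) ≤ Nat.card (stabilizer H x3) ∧
      (orbit H x1).ncard + (orbit H x2).ncard + (orbit H x3).ncard = Nat.card H + 2 := by
  rcases count h2 with h | ⟨x1, x2, x3, hz, a1, a2, a3, hs⟩
  · exact Or.inl h
  right
  rcases le_total (Nat.card (stabilizer H x1)) (Nat.card (stabilizer H x2)) with h12 | h12 <;>
  rcases le_total (Nat.card (stabilizer H x1)) (Nat.card (stabilizer H x3)) with h13 | h13 <;>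
  rcases le_total (Nat.card (stabilizer H x2)) (Nat.card (stabilizer H x3)) with h23 | h23
  · exact ⟨x1, x2, x3, hz, by omega, by omega, by omega, by omega⟩
  · exact ⟨x1, x3, x2, fun z h => by have := hz z h; tauto, by omega, by omega, by omega, by omega⟩
  · exact ⟨x1, x2, x3, hz, by omega, by omega, by omega, by omega⟩
  · exact ⟨x3, x1, x2, fun z h => by have := hz z h; tauto, by omega, by omega, by omega, by omega⟩
  · exact ⟨x2, x1, x3, fun z h => by have := hz z h; tauto, by omega, by omega, by omega, by omega⟩
  · exact ⟨x2, x1, x3, fun z h => by have := hz z h; tauto, by omega, by omega, by omega, by omega⟩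
  · exact ⟨x2, x3, x1, fun z h => by have := hz z h; tauto, by omega, by omega, by omega, by omega⟩
  · exact ⟨x3, x2, x1, fun z h => by have := hz z h; tauto, by omega, by omega, by omega, by omega⟩
end Dickson

namespace Dickson
open MulAction

lemma stab_card_eq {H X : Type*} [Group H] [Finite H] [MulAction H X] {x z : X}
    (h : orbit H z = orbit H x) : Nat.card (stabilizer H z) = Nat.card (stabilizer H x) := by
  have e1 := orb_stab (H := H) z
  have e2 := orb_stab (H := H) x
  rw [h, ← e2] at e1
  refine Nat.eq_of_mul_eq_mul_left ?_ e1
  have := Nat.card_pos (α := H)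
  rcases Nat.eq_zero_or_pos (orbit H x).ncard with h | h
  · rw [h] at e2; omega
  · exact h

lemma ncard_pair_le' {X : Type*} (x y : X) : ({x, y} : Set X).ncard ≤ 2 := by
  refine (Set.ncard_insert_le x {y}).trans ?_
  rw [Set.ncard_singleton]

lemma fix_le_two {H X : Type*} [Group H] [MulAction H X]
    (h2 : ∀ h : H, h ≠ 1 → ∃ x y : X, x ≠ y ∧ ∀ z, h • z = z ↔ z = x ∨ z = y)
    (S : Set X) (hS : 3 ≤ S.ncard) (h : H) (hh : ∀ z ∈ S, h • z = z) : h = 1 := by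
  by_contra hne
  obtain ⟨x, y, -, hxy⟩ := h2 h hne
  have : S ⊆ {x, y} := fun z hz => (hxy z).1 (hh z hz)
  have h3 := Set.ncard_le_ncard this (Set.toFinite _)
  have h4 := ncard_pair_le' x y
  omega

lemma fix_three {H X : Type*} [Group H] [MulAction H X]
    (h2 : ∀ h : H, h ≠ 1 → ∃ x y : X, x ≠ y ∧ ∀ z, h • z = z ↔ z = x ∨ z = y)
    (h : H) {a b c : X} (hab : a ≠ b) (hac : a ≠ c) (hbc : b ≠ c) (ha : h • a = a) (hb : h • b = b)
    (hc : h • c = c) : h = 1 := by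
  by_contra hne
  obtain ⟨x, y, -, hxy⟩ := h2 h hne
  have h1 := (hxy a).1 ha
  have h3 := (hxy b).1 hb
  have h4 := (hxy c).1 hc
  grind

def DihData (H X : Type*) [Group H] [MulAction H X] : Prop :=
  ∃ x y : X, x ≠ y ∧ (∃ c : H, c ≠ 1 ∧ c • x = x ∧ c • y = y) ∧ (∃ h : H, h • x ≠ x) ∧
    (∀ h : H, (h • x = x ∧ h • y = y) ∨ (h • x = y ∧ h • y = x)) ∧
    ∃ a b : H, a ≠ b ∧ orderOf a = 2 ∧ orderOf b = 2 ∧ Subgroup.closure {a, b} = ⊤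

lemma dih_case {H X : Type*} [Group H] [Finite H] [MulAction H X]
    (h2 : ∀ h : H, h ≠ 1 → ∃ x y : X, x ≠ y ∧ ∀ z, h • z = z ↔ z = x ∨ z = y)
    (hcyc : ∀ x : X, IsCyclic (stabilizer H x)) (x : X) (hx : (orbit H x).ncard = 2)
    (hs : 2 ≤ Nat.card (stabilizer H x)) : DihData H X := by
  obtain ⟨y, hxy, horb⟩ : ∃ y, x ≠ y ∧ orbit H x = {x, y} := by
    obtain ⟨a, b, hab, he⟩ := Set.ncard_eq_two.1 hx
    have : x ∈ orbit H x := mem_orbit_self x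
    rw [he] at this
    rcases this with h | h
    · exact ⟨b, by rw [h]; exact hab, by rw [h, ← he, h]⟩
    · have h : x = b := h
      exact ⟨a, by rw [h]; exact hab.symm, by rw [he, h, Set.pair_comm]⟩
  have hact : ∀ h : H, (h • x = x ∧ h • y = y) ∨ (h • x = y ∧ h • y = x) := by
    intro h
    have e1 : h • x ∈ ({x, y} : Set X) := by rw [← horb]; exact mem_orbit x h
    have hy : y ∈ orbit H x := by rw [horb]; simp
    have e2 : h • y ∈ ({x, y} : Set X) := by
      rw [← horb]; exact (mem_orbit_of_mem_orbit h hy)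
    have e3 : h • x ≠ h • y := fun e => hxy (MulAction.injective h e)
    simp only [Set.mem_insert_iff, Set.mem_singleton_iff] at e1 e2
    rcases e1 with e1 | e1 <;> rcases e2 with e2 | e2
    · exact absurd (e1.trans e2.symm) e3
    · exact Or.inl ⟨e1, e2⟩
    · exact Or.inr ⟨e1, e2⟩
    · exact absurd (e1.trans e2.symm) e3
  obtain ⟨h, hh⟩ : ∃ h : H, h • x = y := by
    have hy : y ∈ orbit H x := by rw [horb]; simp
    exact hy
  have hinv : ∀ k : H, k • x = y → orderOf k = 2 := by
    intro k hk
    have hk1 : k ≠ 1 := by rintro rfl; exact hxy (by simpa using hk)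
    have hky : k • y = x := by
      rcases hact k with e | e
      · exact absurd (e.1.symm.trans hk) hxy
      · exact e.2
    obtain ⟨w, w', -, hww⟩ := h2 k hk1
    have hw := (hww w).2 (Or.inl rfl)
    have hwx : x ≠ w := by rintro rfl; exact hxy (hw.symm.trans hk)
    have hwy : y ≠ w := by rintro rfl; exact hxy (hky.symm.trans hw)
    have : k ^ 2 = 1 := by
      apply fix_three h2 (k ^ 2) hxy hwx hwy <;> simp only [pow_two, mul_smul, hk, hky, hw]
    exact orderOf_eq_prime this hk1
  obtain ⟨⟨c, hc⟩, hcg⟩ := (hcyc x).exists_generator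
  have hcx : c • x = x := hc
  have hpow : ∀ k : H, k • x = x → k ∈ Subgroup.zpowers c := by
    intro k hk
    obtain ⟨n, hn⟩ := Subgroup.mem_zpowers_iff.1 (hcg ⟨k, hk⟩)
    exact Subgroup.mem_zpowers_iff.2 ⟨n, by simpa [Subtype.ext_iff] using hn⟩
  have hc1 : c ≠ 1 := by
    rintro rfl
    have : Nontrivial (stabilizer H x) := Finite.one_lt_card_iff_nontrivial.1 (by omega)
    obtain ⟨k, hk⟩ := exists_ne (1 : stabilizer H x)
    have := hpow k k.2
    rw [Subgroup.zpowers_one_eq_bot, Subgroup.mem_bot] at this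
    exact hk (Subtype.ext this)
  refine ⟨x, y, hxy, ⟨c, hc1, hcx, ?_⟩, ⟨h, by rw [hh]; exact hxy.symm⟩, hact, h, h * c, ?_, hinv h hh,
    hinv _ (by rw [mul_smul, hcx, hh]), ?_⟩
  · rcases hact c with e | e
    · exact e.2
    · exact absurd (hcx.symm.trans e.1) hxy
  · simpa using hc1
  · rw [eq_top_iff]
    intro k _
    have hh' : h ∈ Subgroup.closure {h, h * c} := Subgroup.subset_closure (by simp)
    have hhc : h * c ∈ Subgroup.closure {h, h * c} := Subgroup.subset_closure (by simp)
    have hc' : Subgroup.zpowers c ≤ Subgroup.closure {h, h * c} := by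
      rw [Subgroup.zpowers_le]
      have := Subgroup.mul_mem _ (Subgroup.inv_mem _ hh') hhc
      simpa using this
    rcases hact k with e | e
    · exact hc' (hpow k e.1)
    · have : h⁻¹ * k ∈ Subgroup.zpowers c := hpow _ (by rw [mul_smul, e.1, ← hh, inv_smul_smul])
      have := Subgroup.mul_mem _ hh' (hc' this)
      simpa using this

theorem abstract_class {H X : Type*} [Group H] [Finite H] [MulAction H X] [Nonempty X]
    (h2 : ∀ h : H, h ≠ 1 → ∃ x y : X, x ≠ y ∧ ∀ z, h • z = z ↔ z = x ∨ z = y)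
    (hcyc : ∀ x : X, IsCyclic (stabilizer H x)) :
    (∃ x : X, ∀ h : H, h • x = x) ∨ DihData H X ∨
      Nonempty (H ≃* alternatingGroup (Fin 4)) ∨ Nonempty (H ≃* Equiv.Perm (Fin 4)) ∨
      Nonempty (H ≃* alternatingGroup (Fin 5)) := by
  rcases count' h2 with h | ⟨x1, x2, x3, hz, a1, a12, a23, hs⟩
  · exact Or.inl h
  right
  have o1 := orb_stab (H := H) x1
  have o2 := orb_stab (H := H) x2
  have o3 := orb_stab (H := H) x3
  have hord : ∀ h : H, h ≠ 1 → ∃ z : X, h • z = z ∧ orderOf h ∣ Nat.card (stabilizer H z) := by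
    intro h hh
    obtain ⟨x, y, -, hxy⟩ := h2 h hh
    have := (hxy x).2 (Or.inl rfl)
    exact ⟨x, this, Subgroup.orderOf_dvd_natCard _ this⟩
  rcases numeric o1 o2 o3 hs a1 a12 a23 with hr | ⟨he, hf, hg, hn⟩ | ⟨he, hf, hg, hn⟩ | ⟨he, hf, hg, hn⟩
  · left; exact dih_case h2 hcyc x3 hr (by omega)
  · right; left
    rw [hg, hn] at o3
    have h4 : (orbit H x3).ncard = 4 := by omega
    have hfin : Finite (orbit H x3) := Set.finite_of_ncard_pos (by omega)
    refine alt_of_inj 4 (α := orbit H x3) (by rw [Nat.card_coe_set_eq, h4]) (toPermHom H (orbit H x3)) ?_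
      (by rw [hn]; rfl)
    rw [← MonoidHom.ker_eq_bot_iff, eq_bot_iff]
    intro h hh
    refine fix_le_two h2 (orbit H x3) (by omega) h ?_
    intro z hz
    have := congrArg (fun e => ((e ⟨z, hz⟩ : orbit H x3) : X)) (MonoidHom.mem_ker.1 hh)
    exact this
  · right; right; left
    refine s4_of hn ?_ ?_
    · intro h hh
      have h1 : h ≠ 1 := by rintro rfl; simp at hh
      obtain ⟨z, hz1, hz2⟩ := hord h h1
      rw [hh] at hz2
      rcases hz z ⟨h, h1, hz1⟩ with e | e | e
      · rw [stab_card_eq e, he] at hz2; omega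
      · rw [stab_card_eq e, hf] at hz2; omega
      · rw [stab_card_eq e, hg] at hz2; omega
    · intro hone
      have f3 : Fact (Nat.Prime 3) := ⟨Nat.prime_three⟩
      have := (Nat.card_eq_one_iff_unique.1 hone).1
      have hfac : Nat.card (stabilizer H x2) = 3 ^ (Nat.card H).factorization 3 := by
        have : Nat.factorization 24 3 = 1 := by
          rw [show (24:ℕ) = 3 * 8 by norm_num, Nat.factorization_mul (by norm_num) (by norm_num)]
          simp [Nat.prime_three.factorization, Nat.factorization_eq_zero_of_not_dvd]
        rw [hf, hn, this]; norm_num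
      have hall : ∀ w ∈ orbit H x2, stabilizer H w = stabilizer H x2 := by
        intro w hw
        have hfac' : Nat.card (stabilizer H w) = 3 ^ (Nat.card H).factorization 3 := by
          rw [stab_card_eq (orbit_eq_iff.2 hw), hfac]
        have := Subsingleton.elim (Sylow.ofCard _ hfac') (Sylow.ofCard _ hfac)
        have := congrArg (fun P : Sylow 3 H => (P : Subgroup H)) this
        simpa using this
      have : Nontrivial (stabilizer H x2) := Finite.one_lt_card_iff_nontrivial.1 (by omega)
      obtain ⟨k, hk⟩ := exists_ne (1 : stabilizer H x2)
      rw [hf, hn] at o2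
      apply hk
      apply Subtype.ext
      refine fix_le_two h2 (orbit H x2) (by omega) k ?_
      intro w hw
      have : (k : H) ∈ stabilizer H w := by rw [hall w hw]; exact k.2
      exact this
  · right; right; right
    have h22 : ∀ z : H, orderOf z = 2 → ∀ x : X, z • x = x → orbit H x = orbit H x1 := by
      intro z hz0 x hx
      have h1 : z ≠ 1 := by rintro rfl; simp at hz0
      have hd : orderOf z ∣ Nat.card (stabilizer H x) := Subgroup.orderOf_dvd_natCard _ hx
      rw [hz0] at hd
      rcases hz x ⟨z, h1, hx⟩ with e | e | e
      · exact e
      · rw [stab_card_eq e, hf] at hd; omega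
      · rw [stab_card_eq e, hg] at hd; omega
    refine a5_of hn ?_ ?_ ?_
    · intro h h1 hh
      obtain ⟨z, hz1, hz2⟩ := hord h h1
      rw [hh] at hz2
      rcases hz z ⟨h, h1, hz1⟩ with e | e | e
      · rw [stab_card_eq e, he] at hz2; omega
      · rw [stab_card_eq e, hf] at hz2; omega
      · rw [stab_card_eq e, hg] at hz2; omega
    · intro z hz0
      have h1 : z ≠ 1 := by rintro rfl; simp at hz0
      obtain ⟨x, y, -, hxy⟩ := h2 z h1
      have hx := (hxy x).2 (Or.inl rfl)
      have hsx : Nat.card (stabilizer H x) = 2 := by rw [stab_card_eq (h22 z hz0 x hx), he]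
      set C := Subgroup.centralizer {z} with hC
      rw [← orb_stab (H := C) x]
      have e1 : (orbit C x).ncard ≤ 2 := by
        have : orbit C x ⊆ {x, y} := by
          rintro w ⟨c, rfl⟩
          apply (hxy _).1
          have hc : (c : H) * z = z * c := Subgroup.mem_centralizer_singleton_iff.1 c.2
          change z • ((c : H) • x) = (c : H) • x
          rw [← mul_smul, ← hc, mul_smul, hx]
        exact (Set.ncard_le_ncard this (Set.toFinite _)).trans (ncard_pair_le' x y)
      have e2 : Nat.card (stabilizer C x) ≤ 2 := by
        rw [← hsx]
        refine Nat.card_le_card_of_injective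
          (fun c : stabilizer C x => (⟨((c : C) : H), c.2⟩ : stabilizer H x)) ?_
        intro a b hab
        have := congrArg (fun k : stabilizer H x => (k : H)) hab
        exact Subtype.ext (Subtype.ext this)
      calc _ ≤ 2 * 2 := Nat.mul_le_mul e1 e2
        _ = 4 := rfl
    · intro z z' hz0 hz0'
      have h1 : z ≠ 1 := by rintro rfl; simp at hz0
      have h1' : z' ≠ 1 := by rintro rfl; simp at hz0'
      obtain ⟨x, hx, -⟩ := hord z h1
      obtain ⟨x', hx', -⟩ := hord z' h1'
      have hsx' : Nat.card (stabilizer H x') = 2 := by rw [stab_card_eq (h22 z' hz0' x' hx'), he]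
      have : x' ∈ orbit H x := by
        rw [← orbit_eq_iff, h22 z hz0 x hx, h22 z' hz0' x' hx']
      obtain ⟨h, rfl⟩ := this
      refine ⟨h, ?_⟩
      obtain ⟨w, -, hw⟩ := (Nat.card_eq_two_iff' (1 : stabilizer H ((fun m : H => m • x) h))).1 hsx'
      have e1 := hw ⟨z', hx'⟩ (fun e => h1' (congrArg Subtype.val e))
      have e2 := hw ⟨h * z * h⁻¹, by
        rw [mem_stabilizer_iff]; simp only [mul_smul, inv_smul_smul, hx]⟩
        (fun e => h1 (by simpa using congrArg Subtype.val e))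
      exact congrArg Subtype.val (e1.trans e2.symm)
end Dickson

namespace Dickson
open scoped LinearAlgebra.Projectivization

section general
variable {K : Type*} [Field K]

lemma ext_of_basis {M N : Matrix (Fin 2) (Fin 2) K} {v w : Fin 2 → K} (hD : v 0 * w 1 - v 1 * w 0 ≠ 0)
    (hv : M *ᵥ v = N *ᵥ v) (hw : M *ᵥ w = N *ᵥ w) : M = N := by
  ext i j
  have h1 := congrFun hv i
  have h2 := congrFun hw i
  simp only [Matrix.mulVec, dotProduct, Fin.sum_univ_two] at h1 h2
  fin_cases j
  · apply mul_right_cancel₀ hD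
    simp only [Fin.zero_eta, Fin.isValue]
    linear_combination w 1 * h1 - v 1 * h2
  · apply mul_right_cancel₀ hD
    simp only [Fin.mk_one, Fin.isValue]
    linear_combination v 0 * h2 - w 0 * h1

lemma smul_one_mulVec' (c : K) (v : Fin 2 → K) : (c • (1 : Matrix (Fin 2) (Fin 2) K)) *ᵥ v = c • v := by
  rw [Matrix.smul_mulVec, Matrix.one_mulVec]

lemma exists_eigen {M : Matrix (Fin 2) (Fin 2) K} {a : K} (ha : a * a - M.trace * a + M.det = 0) :
    ∃ v : Fin 2 → K, v ≠ 0 ∧ M *ᵥ v = a • v := by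
  have : (M - a • (1 : Matrix (Fin 2) (Fin 2) K)).det = 0 := by
    rw [Matrix.det_fin_two]
    rw [Matrix.det_fin_two, Matrix.trace_fin_two] at ha
    simp
    linear_combination ha
  obtain ⟨v, hv, h⟩ := Matrix.exists_mulVec_eq_zero_iff.2 this
  refine ⟨v, hv, ?_⟩
  rw [Matrix.sub_mulVec, smul_one_mulVec', sub_eq_zero] at h
  exact h

lemma eigen_root {M : Matrix (Fin 2) (Fin 2) K} {a : K} {v : Fin 2 → K} (hv : v ≠ 0)
    (h : M *ᵥ v = a • v) : a * a - M.trace * a + M.det = 0 := by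
  have : (M - a • (1 : Matrix (Fin 2) (Fin 2) K)).det = 0 := by
    refine Matrix.exists_mulVec_eq_zero_iff.1 ⟨v, hv, ?_⟩
    rw [Matrix.sub_mulVec, smul_one_mulVec', h, sub_self]
  rw [Matrix.det_fin_two] at this
  rw [Matrix.det_fin_two, Matrix.trace_fin_two]
  simp at this
  linear_combination this

lemma indep_of_eigen {M : Matrix (Fin 2) (Fin 2) K} {a b : K} {v w : Fin 2 → K} (hv : v ≠ 0) (hw : w ≠ 0)
    (hab : a ≠ b) (h1 : M *ᵥ v = a • v) (h2 : M *ᵥ w = b • w) : v 0 * w 1 - v 1 * w 0 ≠ 0 := by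
  intro hD
  have h10 := congrFun h1 0
  have h11 := congrFun h1 1
  have h20 := congrFun h2 0
  have h21 := congrFun h2 1
  simp only [Matrix.mulVec, dotProduct, Fin.sum_univ_two, Pi.smul_apply, smul_eq_mul] at h10 h11 h20 h21
  have hab' : a - b ≠ 0 := sub_ne_zero.2 hab
  have e00 : v 0 * w 0 = 0 := by
    apply mul_left_cancel₀ hab'
    linear_combination (-w 0) * h10 + v 0 * h20 - M 0 1 * hD
  have e11 : v 1 * w 1 = 0 := by
    apply mul_left_cancel₀ hab'
    linear_combination (-w 1) * h11 + v 1 * h21 + M 1 0 * hD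
  have e01 : v 0 * w 1 = 0 := by
    apply mul_left_cancel₀ hab'
    linear_combination (-w 1) * h10 + v 1 * h20 + (M 0 0 - b) * hD
  have e10 : v 1 * w 0 = 0 := by linear_combination e01 - hD
  have hv' : v 0 = 0 ∧ v 1 = 0 := by
    by_contra hc
    apply hw
    ext i
    fin_cases i <;> simp <;> grind
  apply hv
  ext i
  fin_cases i
  · exact hv'.1
  · exact hv'.2

lemma proj_ne_iff (P Q : ℙ K (Fin 2 → K)) :
    P ≠ Q ↔ P.rep 0 * Q.rep 1 - P.rep 1 * Q.rep 0 ≠ 0 := by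
  rw [not_iff_not]
  constructor
  · rintro rfl; ring
  · intro h
    rw [← P.mk_rep, ← Q.mk_rep, Projectivization.mk_eq_mk_iff']
    have hQ := Q.rep_nonzero
    by_cases h0 : Q.rep 0 = 0
    · have h1 : Q.rep 1 ≠ 0 := by
        intro h1; apply hQ; ext i; fin_cases i
        · exact h0
        · exact h1
      refine ⟨P.rep 1 / Q.rep 1, ?_⟩
      ext i; fin_cases i
      · simp [h0]
        rw [h0] at h; simp [h1] at h; exact h.symm
      · simp; field_simp
    · refine ⟨P.rep 0 / Q.rep 0, ?_⟩
      ext i; fin_cases i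
      · simp; field_simp
      · simp; field_simp; linear_combination h

lemma proj_mk_eq_iff (v : Fin 2 → K) (hv : v ≠ 0) (Q : ℙ K (Fin 2 → K)) :
    Q = Projectivization.mk K v hv ↔ ∃ a : K, a ≠ 0 ∧ v = a • Q.rep := by
  constructor
  · intro h
    rw [← Q.mk_rep, Projectivization.mk_eq_mk_iff] at h
    obtain ⟨a, ha⟩ := h
    refine ⟨(a⁻¹ : Kˣ), (a⁻¹).ne_zero, ?_⟩
    rw [← ha, ← Units.smul_def, inv_smul_smul]
  · rintro ⟨a, ha, h⟩
    conv_lhs => rw [← Q.mk_rep]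
    rw [Projectivization.mk_eq_mk_iff']
    exact ⟨a⁻¹, by rw [h, inv_smul_smul₀ ha]⟩

/-- a matrix with distinct eigenvalues has exactly two fixed points -/
lemma two_fixed [IsAlgClosed K] (h2 : (2 : K) ≠ 0) {M : Matrix (Fin 2) (Fin 2) K} (hM : M.det ≠ 0)
    (hdisc : M.trace * M.trace - 4 * M.det ≠ 0) :
    ∃ P Q : ℙ K (Fin 2 → K), P ≠ Q ∧
      ∀ R : ℙ K (Fin 2 → K), (∃ a : K, a ≠ 0 ∧ M *ᵥ R.rep = a • R.rep) ↔ R = P ∨ R = Q := by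
  obtain ⟨s, hs⟩ := IsAlgClosed.exists_eq_mul_self (M.trace * M.trace - 4 * M.det)
  have hs0 : s ≠ 0 := by rintro rfl; apply hdisc; rw [hs]; ring
  set a := (M.trace + s) / 2 with ha
  set b := (M.trace - s) / 2 with hb
  have hab : a ≠ b := by
    intro h
    apply hs0
    rw [ha, hb] at h
    field_simp at h
    have : 2 * s = 0 := by linear_combination h
    exact (mul_eq_zero.1 this).resolve_left h2
  have h4 : (4 : K) ≠ 0 := by
    have : (4 : K) = 2 * 2 := by norm_num
    rw [this]; exact mul_ne_zero h2 h2
  have hsum : a + b = M.trace := by rw [ha, hb]; field_simp; ring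
  have hprod : a * b = M.det := by
    rw [ha, hb]
    have : (M.trace + s) / 2 * ((M.trace - s) / 2) = (M.trace * M.trace - s * s) / 4 := by
      field_simp; ring
    rw [this, ← hs]; field_simp; ring
  have hra : a * a - M.trace * a + M.det = 0 := by rw [← hsum, ← hprod]; ring
  have hrb : b * b - M.trace * b + M.det = 0 := by rw [← hsum, ← hprod]; ring
  obtain ⟨v, hv, hMv⟩ := exists_eigen hra
  obtain ⟨w, hw, hMw⟩ := exists_eigen hrb
  have ha0 : a ≠ 0 := by intro h; apply hM; rw [← hprod, h]; ring
  have hb0 : b ≠ 0 := by intro h; apply hM; rw [← hprod, h]; ring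
  set P := Projectivization.mk K v hv with hP
  set Q := Projectivization.mk K w hw with hQ
  have key : ∀ (u : Fin 2 → K) (hu : u ≠ 0) (c : K), M *ᵥ u = c • u →
      M *ᵥ (Projectivization.mk K u hu).rep = c • (Projectivization.mk K u hu).rep := by
    intro u hu c h
    obtain ⟨d, hd, he⟩ := (proj_mk_eq_iff u hu _).1 rfl
    rw [he, Matrix.mulVec_smul, smul_comm c d] at h
    exact smul_right_injective _ hd h
  have hMP := key v hv a hMv
  have hMQ := key w hw b hMw
  rw [← hP] at hMP
  rw [← hQ] at hMQ
  have hPQ : P ≠ Q := (proj_ne_iff P Q).2 (indep_of_eigen P.rep_nonzero Q.rep_nonzero hab hMP hMQ)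
  refine ⟨P, Q, hPQ, ?_⟩
  intro R
  constructor
  · rintro ⟨c, hc, hR⟩
    have hrc := eigen_root R.rep_nonzero hR
    have : (c - a) * (c - b) = 0 := by
      rw [← hsum, ← hprod] at hrc; linear_combination hrc
    rcases mul_eq_zero.1 this with h | h
    · left
      by_contra hne
      have hca : c = a := sub_eq_zero.1 h
      rw [hca] at hR
      have := ext_of_basis (M := M) (N := a • 1) ((proj_ne_iff R P).1 hne) (by rw [smul_one_mulVec', hR])
        (by rw [smul_one_mulVec', hMP])
      rw [this, smul_one_mulVec'] at hMQ
      have h3 : (a - b) • Q.rep = 0 := by rw [sub_smul, hMQ, sub_self]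
      exact (smul_eq_zero.1 h3).elim (fun e => hab (sub_eq_zero.1 e)) Q.rep_nonzero
    · right
      by_contra hne
      have hca : c = b := sub_eq_zero.1 h
      rw [hca] at hR
      have := ext_of_basis (M := M) (N := b • 1) ((proj_ne_iff R Q).1 hne) (by rw [smul_one_mulVec', hR])
        (by rw [smul_one_mulVec', hMQ])
      rw [this, smul_one_mulVec'] at hMP
      have h3 : (a - b) • P.rep = 0 := by rw [sub_smul, hMP, sub_self]
      exact (smul_eq_zero.1 h3).elim (fun e => hab (sub_eq_zero.1 e)) P.rep_nonzero
  · rintro (rfl | rfl)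
    · exact ⟨a, ha0, hMP⟩
    · exact ⟨b, hb0, hMQ⟩

end general
end Dickson

namespace Dickson
open scoped LinearAlgebra.Projectivization

section act
set_option linter.unusedSectionVars false
variable {ℓ : ℕ} [Fact ℓ.Prime]

lemma mat_mul (g h : GL2 ℓ) : mat (g * h) = mat g * mat h := rfl
lemma mat_one : mat (1 : GL2 ℓ) = 1 := rfl
lemma mat_inj {g h : GL2 ℓ} (e : mat g = mat h) : g = h := Units.ext e
lemma mat_pow (g : GL2 ℓ) (n : ℕ) : mat (g ^ n) = mat g ^ n := by simp [mat]
lemma mat_det_ne (g : GL2 ℓ) : (mat g).det ≠ 0 := GeneralLinearGroup.det_ne_zero g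

lemma mem_center_iff' (g : GL2 ℓ) : g ∈ Subgroup.center (GL2 ℓ) ↔ IsScalar g := by
  rw [Matrix.GeneralLinearGroup.mem_center_iff_val_mem_range_scalar]
  constructor
  · rintro ⟨c, hc⟩
    refine ⟨c, ?_⟩
    rw [mat, ← hc, Matrix.smul_one_eq_diagonal]; rfl
  · rintro ⟨c, hc⟩
    refine ⟨c, ?_⟩
    rw [mat, Matrix.smul_one_eq_diagonal] at hc
    rw [hc]; rfl

lemma toPGL_eq_one (g : GL2 ℓ) : toPGL ℓ g = 1 ↔ IsScalar g := by
  rw [← mem_center_iff']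
  exact QuotientGroup.eq_one_iff g

variable (ℓ) in
abbrev KK : Type := AlgebraicClosure (ZMod ℓ)

noncomputable def em (g : GL2 ℓ) : Matrix (Fin 2) (Fin 2) (KK ℓ) :=
  (mat g).map (algebraMap (ZMod ℓ) (KK ℓ))

lemma em_mul (g h : GL2 ℓ) : em (g * h) = em g * em h := by
  rw [em, mat_mul, Matrix.map_mul]; rfl
lemma em_one : em (1 : GL2 ℓ) = 1 := by
  rw [em, mat_one]; exact Matrix.map_one _ (map_zero _) (map_one _)
lemma em_inj {g h : GL2 ℓ} (e : em g = em h) : g = h :=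
  mat_inj (Matrix.map_injective (algebraMap (ZMod ℓ) (KK ℓ)).injective e)
lemma em_det (g : GL2 ℓ) : (em g).det = algebraMap (ZMod ℓ) (KK ℓ) (mat g).det := by
  rw [em]; exact ((algebraMap (ZMod ℓ) (KK ℓ)).map_det _).symm
lemma em_trace (g : GL2 ℓ) : (em g).trace = algebraMap (ZMod ℓ) (KK ℓ) (mat g).trace := by
  rw [em, Matrix.trace_fin_two, Matrix.trace_fin_two, map_add]; rfl
lemma em_det_ne (g : GL2 ℓ) : (em g).det ≠ 0 := by
  rw [em_det]; simpa using mat_det_ne g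
lemma em_scalar {g : GL2 ℓ} {c : ZMod ℓ} (h : mat g = c • (1 : Matrix (Fin 2) (Fin 2) (ZMod ℓ))) :
    em g = algebraMap (ZMod ℓ) (KK ℓ) c • (1 : Matrix (Fin 2) (Fin 2) (KK ℓ)) := by
  rw [em, h]
  ext i j
  fin_cases i <;> fin_cases j <;> simp

noncomputable def actHom : GL2 ℓ →* Equiv.Perm (ℙ (KK ℓ) (Fin 2 → KK ℓ)) :=
  (MulAction.toPermHom (GL (Fin 2) (KK ℓ)) (ℙ (KK ℓ) (Fin 2 → KK ℓ))).comp
    (GeneralLinearGroup.map (algebraMap (ZMod ℓ) (KK ℓ)))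

lemma actHom_iff (g : GL2 ℓ) (P Q : ℙ (KK ℓ) (Fin 2 → KK ℓ)) :
    actHom g P = Q ↔ ∃ a : KK ℓ, a ≠ 0 ∧ em g *ᵥ P.rep = a • Q.rep := by
  have hne : em g *ᵥ P.rep ≠ 0 := by
    intro h
    exact em_det_ne g (Matrix.exists_mulVec_eq_zero_iff.1 ⟨_, P.rep_nonzero, h⟩)
  rw [← proj_mk_eq_iff (em g *ᵥ P.rep) hne Q, eq_comm]
  have : actHom g P = Projectivization.mk (KK ℓ) (em g *ᵥ P.rep) hne := by
    conv_lhs => rw [← P.mk_rep]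
    have e : GeneralLinearGroup.map (algebraMap (ZMod ℓ) (KK ℓ)) g • P.rep = em g *ᵥ P.rep := by
      rw [Matrix.GeneralLinearGroup.fin_two_smul]
      ext i
      fin_cases i <;> simp [em, Matrix.mulVec, dotProduct, Fin.sum_univ_two, mat]
    change GeneralLinearGroup.map (algebraMap (ZMod ℓ) (KK ℓ)) g • Projectivization.mk (KK ℓ) P.rep _ = _
    rw [Projectivization.smul_mk]
    simp only [e]
  rw [this]

lemma actHom_scalar {g : GL2 ℓ} (h : IsScalar g) : actHom g = 1 := by
  obtain ⟨c, hc⟩ := h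
  ext P : 1
  rw [Equiv.Perm.one_apply, actHom_iff]
  refine ⟨algebraMap (ZMod ℓ) (KK ℓ) c, ?_, ?_⟩
  · intro h0
    apply em_det_ne g
    rw [em_scalar hc, h0]; simp
  · rw [em_scalar hc, smul_one_mulVec']

noncomputable def pglHom : PGL2 ℓ →* Equiv.Perm (ℙ (KK ℓ) (Fin 2 → KK ℓ)) :=
  QuotientGroup.lift _ actHom (fun g hg => actHom_scalar ((mem_center_iff' g).1 hg))

lemma pglHom_toPGL (g : GL2 ℓ) : pglHom (toPGL ℓ g) = actHom g := rfl

noncomputable instance actH (G : Subgroup (GL2 ℓ)) :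
    MulAction ↥(projImage G) (ℙ (KK ℓ) (Fin 2 → KK ℓ)) :=
  MulAction.compHom _ ((pglHom (ℓ := ℓ)).comp (projImage G).subtype)

lemma mem_proj {G : Subgroup (GL2 ℓ)} {g : GL2 ℓ} (hg : g ∈ G) : toPGL ℓ g ∈ projImage G :=
  Subgroup.mem_map_of_mem _ hg

lemma smul_H {G : Subgroup (GL2 ℓ)} {g : GL2 ℓ} (hg : g ∈ G) (P : ℙ (KK ℓ) (Fin 2 → KK ℓ)) :
    (⟨toPGL ℓ g, mem_proj hg⟩ : projImage G) • P = actHom g P := rfl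

lemma exists_lift {G : Subgroup (GL2 ℓ)} (h : projImage G) :
    ∃ g, ∃ hg : g ∈ G, h = ⟨toPGL ℓ g, mem_proj hg⟩ := by
  obtain ⟨h, g, hg, rfl⟩ := h
  exact ⟨g, hg, rfl⟩

lemma two_ne (hℓ : ℓ ≠ 2) : (2 : ZMod ℓ) ≠ 0 := by
  have : ((2 : ℕ) : ZMod ℓ) ≠ 0 := by
    rw [Ne, ZMod.natCast_eq_zero_iff]
    intro h
    exact hℓ ((Nat.prime_dvd_prime_iff_eq (Fact.out) Nat.prime_two).1 h)
  exact_mod_cast this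

lemma two_ne' (hℓ : ℓ ≠ 2) : (2 : KK ℓ) ≠ 0 := by
  have := two_ne hℓ
  intro h
  apply this
  apply (algebraMap (ZMod ℓ) (KK ℓ)).injective
  rw [map_zero, map_ofNat]; exact h

/-- nilpotent-type elements of order prime to `ℓ` are scalar -/
lemma scalar_of_disc (hℓ : ℓ ≠ 2) {G : Subgroup (GL2 ℓ)} (hG : ¬ ℓ ∣ Nat.card G) {g : GL2 ℓ}
    (hg : g ∈ G) (hd : (mat g).trace * (mat g).trace - 4 * (mat g).det = 0) : IsScalar g := by
  have h2 := two_ne hℓ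
  set c := (mat g).trace / 2 with hc
  have hsq : (mat g - c • 1) ^ 2 = 0 := by
    have h4 : (mat g).trace = 2 * c := by rw [hc]; field_simp
    have hdet : (mat g).det = c * c := by
      have h4' : (4 : ZMod ℓ) ≠ 0 := by
        have : (4 : ZMod ℓ) = 2 * 2 := by norm_num
        rw [this]; exact mul_ne_zero h2 h2
      apply mul_left_cancel₀ h4'
      rw [h4] at hd; linear_combination -hd
    rw [Matrix.trace_fin_two] at h4
    rw [Matrix.det_fin_two] at hdet
    have h11 : mat g 1 1 = 2 * c - mat g 0 0 := by linear_combination h4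
    rw [h11] at hdet
    rw [sq]
    ext i j
    fin_cases i <;> fin_cases j <;> simp [Matrix.mul_apply, Fin.sum_univ_two, h11]
    · linear_combination -hdet
    · ring
    · ring
    · linear_combination -hdet
  have hp : (mat g - c • 1) ^ ℓ = 0 := by
    have : 2 ≤ ℓ := (Fact.out : ℓ.Prime).two_le
    exact pow_eq_zero_of_le this hsq
  have hcomm : Commute (mat g) (c • (1 : Matrix (Fin 2) (Fin 2) (ZMod ℓ))) :=
    (Commute.one_right _).smul_right _
  rw [sub_pow_char_of_commute _ hcomm, sub_eq_zero, smul_pow, one_pow, ← mat_pow] at hp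
  have h1 : toPGL ℓ g ^ ℓ = 1 := by
    rw [← map_pow, toPGL_eq_one]
    exact ⟨_, hp⟩
  rw [← toPGL_eq_one]
  by_contra hne
  have ho : orderOf (toPGL ℓ g) = ℓ := orderOf_eq_prime h1 hne
  apply hG
  have e1 : orderOf (toPGL ℓ g) ∣ orderOf g := orderOf_map_dvd _ _
  have e2 : orderOf g ∣ Nat.card G := by
    have := orderOf_dvd_natCard (⟨g, hg⟩ : G)
    rwa [Subgroup.orderOf_mk] at this
  rw [ho] at e1
  exact e1.trans e2

lemma scalar_of_eigen (hℓ : ℓ ≠ 2) {G : Subgroup (GL2 ℓ)} (hG : ¬ ℓ ∣ Nat.card G) {g : GL2 ℓ}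
    (hg : g ∈ G) {v : Fin 2 → KK ℓ} (hv : v ≠ 0) {a : KK ℓ} (h : em g *ᵥ v = a • v)
    (ha : a * a = (em g).det) : IsScalar g := by
  apply scalar_of_disc hℓ hG hg
  have hr := eigen_root hv h
  have ha0 : a ≠ 0 := by rintro rfl; exact em_det_ne g (by rw [← ha]; ring)
  have ht : (em g).trace = 2 * a := by
    apply mul_right_cancel₀ ha0
    linear_combination -hr - ha
  apply (algebraMap (ZMod ℓ) (KK ℓ)).injective
  rw [map_sub, map_mul, map_mul, ← em_trace, ← em_det, ht, ← ha, map_ofNat, map_zero]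
  ring

lemma em_inv_mulVec {g : GL2 ℓ} {v w : Fin 2 → KK ℓ} {a : KK ℓ} (ha : a ≠ 0) (h : em g *ᵥ v = a • w) :
    em g⁻¹ *ᵥ w = a⁻¹ • v := by
  have : em g⁻¹ *ᵥ (em g *ᵥ v) = v := by
    rw [Matrix.mulVec_mulVec, ← em_mul, inv_mul_cancel, em_one, Matrix.one_mulVec]
  rw [h, Matrix.mulVec_smul] at this
  rw [← this, inv_smul_smul₀ ha]

/-- elements sharing a fixed point commute -/
lemma comm_of_fix (hℓ : ℓ ≠ 2) {G : Subgroup (GL2 ℓ)} (hG : ¬ ℓ ∣ Nat.card G) {g k : GL2 ℓ}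
    (hg : g ∈ G) (hk : k ∈ G) {P : ℙ (KK ℓ) (Fin 2 → KK ℓ)} (h1 : actHom g P = P)
    (h2 : actHom k P = P) : k * g = g * k := by
  rw [actHom_iff] at h1 h2
  obtain ⟨a, ha, h1⟩ := h1
  obtain ⟨b, hb, h2⟩ := h2
  have h1' := em_inv_mulVec ha h1
  have h2' := em_inv_mulVec hb h2
  have hm : k * g * k⁻¹ * g⁻¹ ∈ G := G.mul_mem (G.mul_mem (G.mul_mem hk hg) (G.inv_mem hk)) (G.inv_mem hg)
  have he : em (k * g * k⁻¹ * g⁻¹) *ᵥ P.rep = (1 : KK ℓ) • P.rep := by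
    rw [em_mul, em_mul, em_mul]
    simp only [← Matrix.mulVec_mulVec, h1', h2', h1, h2, Matrix.mulVec_smul, smul_smul]
    congr 1
    field_simp
  have hdet : (em (k * g * k⁻¹ * g⁻¹)).det = 1 := by
    have : (mat (k * g * k⁻¹ * g⁻¹)).det = 1 := by
      have : GeneralLinearGroup.det (k * g * k⁻¹ * g⁻¹) = 1 := by
        simp only [map_mul, map_inv]; exact by rw [mul_comm (GeneralLinearGroup.det k)]; simp
      exact congrArg Units.val this
    rw [em_det, this, map_one]
  obtain ⟨c, hc⟩ := scalar_of_eigen hℓ hG hm P.rep_nonzero he (by rw [hdet]; ring)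
  have hc1 := em_scalar hc
  rw [hc1, smul_one_mulVec'] at he
  have hcc : algebraMap (ZMod ℓ) (KK ℓ) c = 1 := smul_left_injective _ P.rep_nonzero he
  rw [hcc, one_smul, ← em_one] at hc1
  have := em_inj hc1
  rw [mul_inv_eq_one, mul_inv_eq_iff_eq_mul] at this
  exact this

lemma h2_hyp (hℓ : ℓ ≠ 2) {G : Subgroup (GL2 ℓ)} (hG : ¬ ℓ ∣ Nat.card G) (h : projImage G) (hh : h ≠ 1) :
    ∃ x y : ℙ (KK ℓ) (Fin 2 → KK ℓ), x ≠ y ∧ ∀ z, h • z = z ↔ z = x ∨ z = y := by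
  obtain ⟨g, hg, rfl⟩ := exists_lift h
  have hns : ¬ IsScalar g := by
    intro hs; apply hh
    exact Subtype.ext ((toPGL_eq_one g).2 hs)
  have hd : (em g).trace * (em g).trace - 4 * (em g).det ≠ 0 := by
    intro h0
    apply hns
    apply scalar_of_disc hℓ hG hg
    apply (algebraMap (ZMod ℓ) (KK ℓ)).injective
    rw [map_sub, map_mul, map_mul, ← em_trace, ← em_det, map_ofNat, map_zero]
    exact h0
  obtain ⟨P, Q, hPQ, hR⟩ := two_fixed (two_ne' hℓ) (em_det_ne g) hd
  refine ⟨P, Q, hPQ, fun z => ?_⟩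
  rw [smul_H hg, actHom_iff]
  exact hR z

lemma hcyc_hyp (hℓ : ℓ ≠ 2) {G : Subgroup (GL2 ℓ)} (hG : ¬ ℓ ∣ Nat.card G)
    (P : ℙ (KK ℓ) (Fin 2 → KK ℓ)) : IsCyclic (MulAction.stabilizer ↥(projImage G) P) := by
  let GP : Subgroup (GL2 ℓ) :=
    { carrier := {g | g ∈ G ∧ actHom g P = P}
      mul_mem' := by
        rintro a b ⟨h1, h2⟩ ⟨h3, h4⟩
        refine ⟨G.mul_mem h1 h3, ?_⟩
        rw [map_mul, Equiv.Perm.mul_apply, h4, h2]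
      one_mem' := ⟨G.one_mem, by simp⟩
      inv_mem' := by
        rintro a ⟨h1, h2⟩
        refine ⟨G.inv_mem h1, ?_⟩
        rw [map_inv, Equiv.Perm.inv_eq_iff_eq, h2] }
  have hex : ∀ g : GP, ∃ a : (KK ℓ)ˣ, em g.1 *ᵥ P.rep = (a : KK ℓ) • P.rep := by
    rintro ⟨g, hg, hP⟩
    obtain ⟨a, ha, h⟩ := (actHom_iff _ _ _).1 hP
    exact ⟨Units.mk0 a ha, h⟩
  choose lam hlam using hex
  have huniq : ∀ (g : GP) (a : KK ℓ), em g.1 *ᵥ P.rep = a • P.rep → (lam g : KK ℓ) = a := by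
    intro g a h
    exact smul_left_injective _ P.rep_nonzero ((hlam g).symm.trans h)
  have hmul : ∀ g h : GP, lam (g * h) = lam g * lam h := by
    intro g h
    ext
    apply huniq
    change em (g.1 * h.1) *ᵥ _ = _
    rw [em_mul, ← Matrix.mulVec_mulVec, hlam, Matrix.mulVec_smul, hlam, smul_smul, Units.val_mul, mul_comm]
  let lamH : GP →* (KK ℓ)ˣ := MonoidHom.mk' lam hmul
  let detH : GP →* (KK ℓ)ˣ := ((Units.map (algebraMap (ZMod ℓ) (KK ℓ)).toMonoidHom).comp
    GeneralLinearGroup.det).comp GP.subtype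
  let chi : GP →* (KK ℓ)ˣ := lamH ^ 2 * detH⁻¹
  have hker : ∀ g : GP, chi g = 1 → IsScalar g.1 := by
    intro g h
    apply scalar_of_eigen hℓ hG g.2.1 P.rep_nonzero (hlam g)
    have h1 : lam g ^ 2 * (detH g)⁻¹ = 1 := h
    rw [mul_inv_eq_one] at h1
    have h2 := congrArg Units.val h1
    rw [em_det, ← sq]
    exact h2
  have : Finite GP := inferInstance
  have hfr : Finite chi.range := Set.finite_range chi
  have hcr : IsCyclic chi.range := by infer_instance
  obtain ⟨⟨_, g0, rfl⟩, hgen⟩ := hcr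
  have hst0 : (⟨toPGL ℓ g0.1, mem_proj g0.2.1⟩ : projImage G) ∈ MulAction.stabilizer ↥(projImage G) P := by
    rw [MulAction.mem_stabilizer_iff, smul_H g0.2.1]; exact g0.2.2
  refine ⟨⟨⟨_, hst0⟩, ?_⟩⟩
  rintro ⟨h, hh⟩
  obtain ⟨g, hg, rfl⟩ := exists_lift h
  have hgP : actHom g P = P := by
    rw [MulAction.mem_stabilizer_iff, smul_H hg] at hh; exact hh
  obtain ⟨k, hk⟩ := hgen ⟨chi ⟨g, hg, hgP⟩, ⟨_, rfl⟩⟩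
  refine ⟨k, ?_⟩
  have hk' : chi g0 ^ k = chi ⟨g, hg, hgP⟩ := congrArg Subtype.val hk
  have h3 : chi (g0 ^ k * (⟨g, hg, hgP⟩ : GP)⁻¹) = 1 := by
    rw [map_mul, map_zpow, map_inv, hk', mul_inv_cancel]
  have h4 := hker _ h3
  rw [← toPGL_eq_one] at h4
  have h5 : toPGL ℓ (g0.1 ^ k * g⁻¹) = 1 := h4
  rw [map_mul, map_inv, mul_inv_eq_one, map_zpow] at h5
  apply Subtype.ext
  apply Subtype.ext
  exact h5

end act
end Dickson

namespace Dickson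
open scoped LinearAlgebra.Projectivization

section fin
set_option linter.unusedSectionVars false
variable {ℓ : ℕ} [Fact ℓ.Prime]

lemma conj_shape {g : GL2 ℓ} {Q D : Matrix (Fin 2) (Fin 2) (ZMod ℓ)} (hQ : Q.det ≠ 0)
    (h : mat g * Q = Q * D) : ∃ x : GL2 ℓ, mat (x * g * x⁻¹) = D := by
  let q : GL2 ℓ := GeneralLinearGroup.mkOfDetNeZero Q hQ
  have hq : mat q = Q := rfl
  refine ⟨q⁻¹, ?_⟩
  rw [inv_inv, mul_assoc, mat_mul, mat_mul, hq, h, ← Matrix.mul_assoc, ← hq, ← mat_mul, inv_mul_cancel,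
    mat_one, Matrix.one_mul]

lemma split_or (hℓ : ℓ ≠ 2) {δ : ZMod ℓ} (hδ : ¬ IsSquare δ) {g : GL2 ℓ}
    (hd : (mat g).trace * (mat g).trace - 4 * (mat g).det ≠ 0) :
    ∃ x : GL2 ℓ, (∃ a b : ZMod ℓ, a ≠ b ∧ mat (x * g * x⁻¹) = !![a, 0; 0, b]) ∨
      (∃ a b : ZMod ℓ, b ≠ 0 ∧ mat (x * g * x⁻¹) = !![a, δ * b; b, a]) := by
  have h2 := two_ne hℓ
  have h4 : (4 : ZMod ℓ) ≠ 0 := by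
    have : (4 : ZMod ℓ) = 2 * 2 := by norm_num
    rw [this]; exact mul_ne_zero h2 h2
  by_cases hs : IsSquare ((mat g).trace * (mat g).trace - 4 * (mat g).det)
  · obtain ⟨s, hs⟩ := hs
    have hs0 : s ≠ 0 := by rintro rfl; apply hd; rw [hs]; ring
    have hra : ((mat g).trace + s) / 2 * (((mat g).trace + s) / 2)
        - (mat g).trace * (((mat g).trace + s) / 2) + (mat g).det = 0 := by
      field_simp; linear_combination -hs
    have hrb : ((mat g).trace - s) / 2 * (((mat g).trace - s) / 2)
        - (mat g).trace * (((mat g).trace - s) / 2) + (mat g).det = 0 := by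
      field_simp; linear_combination -hs
    have hab : ((mat g).trace + s) / 2 ≠ ((mat g).trace - s) / 2 := by
      intro h
      apply hs0
      field_simp at h
      have : 2 * s = 0 := by linear_combination h
      exact (mul_eq_zero.1 this).resolve_left h2
    set a := ((mat g).trace + s) / 2
    set b := ((mat g).trace - s) / 2
    obtain ⟨v, hv, hMv⟩ := exists_eigen hra
    obtain ⟨w, hw, hMw⟩ := exists_eigen hrb
    have hD := indep_of_eigen hv hw hab hMv hMw
    obtain ⟨x, hx⟩ := conj_shape (g := g) (Q := !![v 0, w 0; v 1, w 1]) (D := !![a, 0; 0, b])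
      (by rw [Matrix.det_fin_two_of]; intro h; apply hD; linear_combination h)
      (by
        have h10 := congrFun hMv 0
        have h11 := congrFun hMv 1
        have h20 := congrFun hMw 0
        have h21 := congrFun hMw 1
        simp only [Matrix.mulVec, dotProduct, Fin.sum_univ_two, Pi.smul_apply, smul_eq_mul] at h10 h11 h20 h21
        ext i j
        fin_cases i <;> fin_cases j <;> simp [Matrix.mul_apply, Fin.sum_univ_two]
        · linear_combination h10
        · linear_combination h20
        · linear_combination h11
        · linear_combination h21)
    exact ⟨x, Or.inl ⟨a, b, hab, hx⟩⟩
  · have hδ0 : δ ≠ 0 := by rintro rfl; exact hδ ⟨0, by simp⟩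
    have hc : ringChar (ZMod ℓ) ≠ 2 := by rw [ZMod.ringChar_zmod_n]; exact hℓ
    obtain ⟨r, hr⟩ : IsSquare (((mat g).trace * (mat g).trace - 4 * (mat g).det) * δ) := by
      rw [← quadraticChar_one_iff_isSquare (mul_ne_zero hd hδ0), map_mul,
        quadraticChar_neg_one_iff_not_isSquare.2 hs, quadraticChar_neg_one_iff_not_isSquare.2 hδ]
      norm_num
    set t := (mat g).trace with ht
    set d := (mat g).det with hdd
    have hr0 : r ≠ 0 := by
      rintro rfl
      rw [mul_zero] at hr
      exact mul_ne_zero hd hδ0 hr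
    obtain ⟨b, hb⟩ : ∃ b, b = r / (2 * δ) := ⟨_, rfl⟩
    have hb0 : b ≠ 0 := by rw [hb]; exact div_ne_zero hr0 (mul_ne_zero h2 hδ0)
    have hr' : r = 2 * δ * b := by rw [hb]; field_simp
    have hΔ : t * t - 4 * d = 4 * δ * b * b := by
      apply mul_right_cancel₀ hδ0
      rw [hr, hr']; ring
    obtain ⟨c, hcc⟩ : ∃ c, c = t / 2 := ⟨_, rfl⟩
    have htc : t = 2 * c := by rw [hcc]; field_simp
    have htt : mat g 1 1 = 2 * c - mat g 0 0 := by
      rw [ht, Matrix.trace_fin_two] at htc; linear_combination htc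
    have hd' : c * c - d = δ * b * b := by
      apply mul_left_cancel₀ h4
      rw [htc] at hΔ
      linear_combination hΔ
    rw [hdd, Matrix.det_fin_two, htt] at hd'
    have hg10 : mat g 1 0 ≠ 0 := by
      intro h
      apply hs
      refine ⟨2 * (mat g 0 0 - c), ?_⟩
      rw [hΔ]
      rw [h] at hd'
      linear_combination -4 * hd'
    obtain ⟨x, hx⟩ := conj_shape (g := g) (Q := !![1, (mat g 0 0 - c) / b; 0, mat g 1 0 / b])
      (D := !![c, δ * b; b, c])
      (by rw [Matrix.det_fin_two_of]; simp [hg10, hb0])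
      (by
        ext i j
        fin_cases i <;> fin_cases j <;> simp [Matrix.mul_apply, Fin.sum_univ_two, htt]
        · field_simp; ring
        · field_simp; linear_combination hd'
        · field_simp
        · field_simp; ring)
    exact ⟨x, Or.inr ⟨c, b, hb0, hx⟩⟩

lemma shape_or (hℓ : ℓ ≠ 2) {δ : ZMod ℓ} (hδ : ¬ IsSquare δ) {g : GL2 ℓ}
    (hd : (mat g).trace * (mat g).trace - 4 * (mat g).det ≠ 0) :
    ∃ x : GL2 ℓ, ((∀ k, k * g = g * k → InCsp (x * k * x⁻¹)) ∧
        ∀ k, mat k * mat g + mat g * mat k = (mat g).trace • mat k → IsAnti (x * k * x⁻¹)) ∨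
      ((∀ k, k * g = g * k → InCns δ (x * k * x⁻¹)) ∧
        ∀ k, mat k * mat g + mat g * mat k = (mat g).trace • mat k → InNnsAnti δ (x * k * x⁻¹)) := by
  obtain ⟨x, hx⟩ := split_or hℓ hδ hd
  refine ⟨x, ?_⟩
  have hxx : mat x⁻¹ * mat x = 1 := by rw [← mat_mul, inv_mul_cancel, mat_one]
  have hxx' : mat x * mat x⁻¹ = 1 := by rw [← mat_mul, mul_inv_cancel, mat_one]
  have c1 : ∀ k, k * g = g * k →
      mat (x * k * x⁻¹) * mat (x * g * x⁻¹) = mat (x * g * x⁻¹) * mat (x * k * x⁻¹) := by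
    intro k hk
    rw [← mat_mul, ← mat_mul]
    congr 1
    calc x * k * x⁻¹ * (x * g * x⁻¹) = x * (k * g) * x⁻¹ := by group
      _ = x * g * x⁻¹ * (x * k * x⁻¹) := by rw [hk]; group
  have htr : (mat (x * g * x⁻¹)).trace = (mat g).trace := by
    rw [mat_mul, Matrix.trace_mul_comm, mat_mul, ← Matrix.mul_assoc, hxx, Matrix.one_mul]
  have c2 : ∀ k, mat k * mat g + mat g * mat k = (mat g).trace • mat k →
      mat (x * k * x⁻¹) * mat (x * g * x⁻¹) + mat (x * g * x⁻¹) * mat (x * k * x⁻¹)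
        = (mat (x * g * x⁻¹)).trace • mat (x * k * x⁻¹) := by
    intro k hk
    rw [htr]
    have e1 : x * k * x⁻¹ * (x * g * x⁻¹) = x * (k * g) * x⁻¹ := by group
    have e2 : x * g * x⁻¹ * (x * k * x⁻¹) = x * (g * k) * x⁻¹ := by group
    rw [← mat_mul, ← mat_mul, e1, e2]
    simp only [mat_mul]
    rw [← Matrix.add_mul, ← Matrix.mul_add, hk, Matrix.mul_smul, Matrix.smul_mul]
  rcases hx with ⟨a, b, hab, hD⟩ | ⟨a, b, hb, hD⟩
  · left
    have hab' : a - b ≠ 0 := sub_ne_zero.2 hab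
    refine ⟨fun k hk => ?_, fun k hk => ?_⟩
    · have h := c1 k hk
      rw [hD] at h
      have h01 := congrFun (congrFun h 0) 1
      have h10 := congrFun (congrFun h 1) 0
      simp [Matrix.mul_apply, Fin.sum_univ_two] at h01 h10
      constructor
      · apply mul_left_cancel₀ hab'; linear_combination -h01
      · apply mul_left_cancel₀ hab'; linear_combination h10
    · have h := c2 k hk
      rw [hD, Matrix.trace_fin_two_of] at h
      have h00 := congrFun (congrFun h 0) 0
      have h11 := congrFun (congrFun h 1) 1
      simp only [Matrix.add_apply, Matrix.mul_apply, Fin.sum_univ_two, Matrix.smul_apply, smul_eq_mul] at h00 h11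
      simp at h00 h11
      constructor
      · apply mul_left_cancel₀ hab'; linear_combination h00
      · apply mul_left_cancel₀ hab'; linear_combination -h11
  · right
    refine ⟨fun k hk => ?_, fun k hk => ?_⟩
    · have h := c1 k hk
      rw [hD] at h
      have h00 := congrFun (congrFun h 0) 0
      have h10 := congrFun (congrFun h 1) 0
      simp only [Matrix.mul_apply, Fin.sum_univ_two] at h00 h10
      simp only [Matrix.of_apply, Matrix.cons_val', Matrix.cons_val_zero, Matrix.cons_val_one, Matrix.cons_val_fin_one] at h00 h10
      constructor
      · apply mul_left_cancel₀ hb; linear_combination h10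
      · apply mul_left_cancel₀ hb; linear_combination h00
    · have h := c2 k hk
      rw [hD, Matrix.trace_fin_two_of] at h
      have h00 := congrFun (congrFun h 0) 0
      have h10 := congrFun (congrFun h 1) 0
      simp only [Matrix.add_apply, Matrix.mul_apply, Fin.sum_univ_two, Matrix.smul_apply, smul_eq_mul] at h00 h10
      simp only [Matrix.of_apply, Matrix.cons_val', Matrix.cons_val_zero, Matrix.cons_val_one, Matrix.cons_val_fin_one] at h00 h10
      constructor
      · apply mul_left_cancel₀ hb; linear_combination h10
      · apply mul_left_cancel₀ hb; linear_combination h00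

lemma not_csp_anti {k : GL2 ℓ} (h1 : InCsp k) (h2 : IsAnti k) : False := by
  apply mat_det_ne k
  rw [Matrix.det_fin_two, h1.1, h2.1]; ring

lemma not_cns_anti (hℓ : ℓ ≠ 2) {δ : ZMod ℓ} (hδ : ¬ IsSquare δ) {k : GL2 ℓ} (h1 : InCns δ k)
    (h2 : InNnsAnti δ k) : False := by
  have t2 := two_ne hℓ
  have hδ0 : δ ≠ 0 := by rintro rfl; exact hδ ⟨0, by simp⟩
  obtain ⟨a1, a2⟩ := h1
  obtain ⟨b1, b2⟩ := h2
  have e0 : mat k 0 0 = 0 := by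
    apply mul_left_cancel₀ t2; linear_combination b1 - a1
  have e1 : mat k 0 1 = 0 := by
    apply mul_left_cancel₀ t2; linear_combination b2 + a2
  apply mat_det_ne k
  rw [Matrix.det_fin_two, e0, e1]; ring

lemma swap_rel {g k : GL2 ℓ}
    (hd : (mat g).trace * (mat g).trace - 4 * (mat g).det ≠ 0)
    {P Q : ℙ (KK ℓ) (Fin 2 → KK ℓ)} (hPQ : P ≠ Q) (hP : actHom g P = P) (hQ : actHom g Q = Q)
    (hkP : actHom k P = Q) (hkQ : actHom k Q = P) :
    mat k * mat g + mat g * mat k = (mat g).trace • mat k := by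
  rw [actHom_iff] at hP hQ hkP hkQ
  obtain ⟨a, ha, hP⟩ := hP
  obtain ⟨b, hb, hQ⟩ := hQ
  obtain ⟨c, hc, hkP⟩ := hkP
  obtain ⟨d, hd', hkQ⟩ := hkQ
  have hD := (proj_ne_iff P Q).1 hPQ
  have hab : a ≠ b := by
    rintro rfl
    have := ext_of_basis (M := em g) (N := a • 1) hD (by rw [smul_one_mulVec', hP])
        (by rw [smul_one_mulVec', hQ])
    apply hd
    apply (algebraMap (ZMod ℓ) (KK ℓ)).injective
    rw [map_sub, map_mul, map_mul, ← em_trace, ← em_det, map_ofNat, map_zero, this,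
      Matrix.det_fin_two, Matrix.trace_fin_two]
    simp; ring
  have ht : a + b = (em g).trace := by
    have r1 := eigen_root P.rep_nonzero hP
    have r2 := eigen_root Q.rep_nonzero hQ
    apply mul_left_cancel₀ (sub_ne_zero.2 hab)
    linear_combination r1 - r2
  have : em k * em g + em g * em k = (em g).trace • em k := by
    apply ext_of_basis hD
    · rw [Matrix.add_mulVec, ← Matrix.mulVec_mulVec, ← Matrix.mulVec_mulVec, Matrix.smul_mulVec, hP, hkP,
        Matrix.mulVec_smul, Matrix.mulVec_smul, hQ, hkP, ← ht]
      module
    · rw [Matrix.add_mulVec, ← Matrix.mulVec_mulVec, ← Matrix.mulVec_mulVec, Matrix.smul_mulVec, hQ, hkQ,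
        Matrix.mulVec_smul, Matrix.mulVec_smul, hP, hkQ, ← ht]
      module
  apply Matrix.map_injective (algebraMap (ZMod ℓ) (KK ℓ)).injective
  change (mat k * mat g + mat g * mat k).map _ = ((mat g).trace • mat k).map _
  rw [Matrix.map_add _ (map_add _), Matrix.map_mul, Matrix.map_mul]
  refine this.trans ?_
  rw [em_trace]
  ext i j
  simp [em]

theorem prime_case (hℓ : ℓ ≠ 2) (δ : ZMod ℓ) (hδ : ¬ IsSquare δ) (G : Subgroup (GL2 ℓ))
    (hG : ¬ (ℓ ∣ Nat.card G)) :
      (IsCyclic ↥(projImage G) ∧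
        ((∃ x : GL2 ℓ, ∀ g ∈ G, InCsp (x * g * x⁻¹)) ∨
         (∃ x : GL2 ℓ, ∀ g ∈ G, InCns δ (x * g * x⁻¹)))) ∨
      (IsDihedralSub (projImage G) ∧
        ((∃ x : GL2 ℓ, (∀ g ∈ G, InNsp (x * g * x⁻¹)) ∧ ¬ (∀ g ∈ G, InCsp (x * g * x⁻¹))) ∨
         (∃ x : GL2 ℓ, (∀ g ∈ G, InNns δ (x * g * x⁻¹)) ∧
            ¬ (∀ g ∈ G, InCns δ (x * g * x⁻¹))))) ∨
      (IsA4 (projImage G) ∨ IsS4 (projImage G) ∨ IsA5 (projImage G)) := by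
  have : Finite (PGL2 ℓ) := inferInstance
  have : Nonempty (ℙ (KK ℓ) (Fin 2 → KK ℓ)) := inferInstance
  have hdisc : ∀ g ∈ G, ¬ IsScalar g → (mat g).trace * (mat g).trace - 4 * (mat g).det ≠ 0 :=
    fun g hg hs h0 => hs (scalar_of_disc hℓ hG hg h0)
  rcases abstract_class (H := ↥(projImage G)) (X := ℙ (KK ℓ) (Fin 2 → KK ℓ))
    (h2_hyp hℓ hG) (hcyc_hyp hℓ hG) with ⟨P, hP⟩ | hdih | h4 | hs4 | h5
  · left
    have hP' : ∀ g ∈ G, actHom g P = P := fun g hg => hP ⟨toPGL ℓ g, mem_proj hg⟩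
    constructor
    · have h1 := hcyc_hyp hℓ hG P
      have h2 : MulAction.stabilizer ↥(projImage G) P = ⊤ := by
        rw [eq_top_iff]; intro h _; exact hP h
      rw [h2] at h1
      exact Subgroup.topEquiv.isCyclic.1 h1
    · by_cases hall : ∀ g ∈ G, IsScalar g
      · left
        refine ⟨1, fun g hg => ?_⟩
        obtain ⟨c, hc⟩ := hall g hg
        simp only [one_mul, inv_one, mul_one]
        constructor <;> rw [hc] <;> simp
      · push Not at hall
        obtain ⟨g, hg, hgs⟩ := hall
        have hcomm : ∀ k ∈ G, k * g = g * k :=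
          fun k hk => comm_of_fix hℓ hG hg hk (hP' g hg) (hP' k hk)
        obtain ⟨x, ⟨hx, -⟩ | ⟨hx, -⟩⟩ := shape_or hℓ hδ (hdisc g hg hgs)
        · exact Or.inl ⟨x, fun k hk => hx k (hcomm k hk)⟩
        · exact Or.inr ⟨x, fun k hk => hx k (hcomm k hk)⟩
  · right; left
    obtain ⟨P, Q, hPQ, ⟨c, hc1, hcP, hcQ⟩, ⟨h, hh⟩, hor, a, b, hab, hoa, hob, hcl⟩ := hdih
    constructor
    · refine ⟨a, b, fun e => hab (Subtype.ext e), ?_, ?_, ?_⟩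
      · rw [Subgroup.orderOf_coe, hoa]
      · rw [Subgroup.orderOf_coe, hob]
      · have := congrArg (Subgroup.map (projImage G).subtype) hcl
        rw [MonoidHom.map_closure, ← MonoidHom.range_eq_map, Subgroup.range_subtype, Set.image_pair] at this
        exact this
    · obtain ⟨g, hg, rfl⟩ := exists_lift c
      obtain ⟨k, hk, rfl⟩ := exists_lift h
      have hgP : actHom g P = P := hcP
      have hgQ : actHom g Q = Q := hcQ
      have hkP : actHom k P ≠ P := hh
      have hor' : ∀ g ∈ G, (actHom g P = P ∧ actHom g Q = Q) ∨ (actHom g P = Q ∧ actHom g Q = P) :=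
        fun g hg => hor ⟨toPGL ℓ g, mem_proj hg⟩
      have hns : ¬ IsScalar g := by
        intro hs; apply hc1
        exact Subtype.ext ((toPGL_eq_one g).2 hs)
      have hd := hdisc g hg hns
      have hkk := (hor' k hk).resolve_left (fun h => hkP h.1)
      have hrel := swap_rel hd hPQ hgP hgQ hkk.1 hkk.2
      obtain ⟨x, ⟨hx, hx'⟩ | ⟨hx, hx'⟩⟩ := shape_or hℓ hδ hd
      · left
        refine ⟨x, fun m hm => ?_, fun hall => not_csp_anti (hall k hk) (hx' k hrel)⟩
        rcases hor' m hm with h | h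
        · exact Or.inl (hx m (comm_of_fix hℓ hG hg hm hgP h.1))
        · exact Or.inr (hx' m (swap_rel hd hPQ hgP hgQ h.1 h.2))
      · right
        refine ⟨x, fun m hm => ?_, fun hall => not_cns_anti hℓ hδ (hall k hk) (hx' k hrel)⟩
        rcases hor' m hm with h | h
        · exact Or.inl (hx m (comm_of_fix hℓ hG hg hm hgP h.1))
        · exact Or.inr (hx' m (swap_rel hd hPQ hgP hgQ h.1 h.2))
  · exact Or.inr (Or.inr (Or.inl h4))
  · exact Or.inr (Or.inr (Or.inr (Or.inl hs4)))
  · exact Or.inr (Or.inr (Or.inr (Or.inr h5)))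

end fin
end Dickson

namespace Dickson

section unip
set_option linter.unusedSectionVars false
variable {ℓ : ℕ} [Fact ℓ.Prime]

lemma unip {u : GL2 ℓ} (h : orderOf u = ℓ) :
    (mat u).trace = 2 ∧ (mat u).det = 1 ∧ mat u ≠ 1 := by
  have h1 : mat u ^ ℓ = 1 := by
    have := pow_orderOf_eq_one u
    rw [h] at this
    rw [← mat_pow, this, mat_one]
  have hN : (mat u - 1) ^ ℓ = 0 := by
    rw [sub_pow_char_of_commute _ (Commute.one_right _), h1, one_pow, sub_self]
  have hnil : IsNilpotent (mat u - 1) := ⟨ℓ, hN⟩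
  have htr : (mat u - 1).trace = 0 :=
    (Matrix.isNilpotent_trace_of_isNilpotent hnil).eq_zero
  have hdet : (mat u - 1).det = 0 := by
    have := congrArg Matrix.det hN
    rw [Matrix.det_pow, Matrix.det_zero] at this
    exact pow_eq_zero_iff (Fact.out : ℓ.Prime).ne_zero |>.1 this
  rw [Matrix.trace_fin_two] at htr
  rw [Matrix.det_fin_two] at hdet
  simp at htr hdet
  refine ⟨?_, ?_, ?_⟩
  · rw [Matrix.trace_fin_two]; linear_combination htr
  · rw [Matrix.det_fin_two]; linear_combination hdet + htr
  · intro e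
    have : u = 1 := mat_inj e
    rw [this, orderOf_one] at h
    exact (Fact.out : ℓ.Prime).one_lt.ne h

def upp (t : ZMod ℓ) : GL2 ℓ := GeneralLinearGroup.mkOfDetNeZero !![1, t; 0, 1] (by simp)
def low (t : ZMod ℓ) : GL2 ℓ := GeneralLinearGroup.mkOfDetNeZero !![1, 0; t, 1] (by simp)
lemma mat_upp (t : ZMod ℓ) : mat (upp t) = !![1, t; 0, 1] := rfl
lemma mat_low (t : ZMod ℓ) : mat (low t) = !![1, 0; t, 1] := rfl

lemma upp_pow (t : ZMod ℓ) (n : ℕ) : upp t ^ n = upp ((n : ZMod ℓ) * t) := by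
  induction n with
  | zero =>
    apply mat_inj
    rw [mat_upp, pow_zero, mat_one]
    ext i j; fin_cases i <;> fin_cases j <;> simp
  | succ n ih =>
    rw [pow_succ, ih]
    apply mat_inj
    rw [mat_mul, mat_upp, mat_upp, mat_upp]
    ext i j; fin_cases i <;> fin_cases j <;> simp [Matrix.mul_apply, Fin.sum_univ_two]
    ring

lemma low_pow (t : ZMod ℓ) (n : ℕ) : low t ^ n = low ((n : ZMod ℓ) * t) := by
  induction n with
  | zero =>
    apply mat_inj
    rw [mat_low, pow_zero, mat_one]
    ext i j; fin_cases i <;> fin_cases j <;> simp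
  | succ n ih =>
    rw [pow_succ, ih]
    apply mat_inj
    rw [mat_mul, mat_low, mat_low, mat_low]
    ext i j; fin_cases i <;> fin_cases j <;> simp [Matrix.mul_apply, Fin.sum_univ_two]
    ring

lemma upp_mem {K : Subgroup (GL2 ℓ)} {a : ZMod ℓ} (ha : a ≠ 0) (h : upp a ∈ K) (t : ZMod ℓ) : upp t ∈ K := by
  have : upp t = upp a ^ (t / a).val := by
    rw [upp_pow, ZMod.natCast_zmod_val, div_mul_cancel₀ _ ha]
  rw [this]; exact K.pow_mem h _

lemma low_mem {K : Subgroup (GL2 ℓ)} {a : ZMod ℓ} (ha : a ≠ 0) (h : low a ∈ K) (t : ZMod ℓ) : low t ∈ K := by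
  have : low t = low a ^ (t / a).val := by
    rw [low_pow, ZMod.natCast_zmod_val, div_mul_cancel₀ _ ha]
  rw [this]; exact K.pow_mem h _

lemma sl_mem {K : Subgroup (GL2 ℓ)} (hu : ∀ t, upp t ∈ K) (hl : ∀ t, low t ∈ K) {g : GL2 ℓ}
    (hg : (mat g).det = 1) : g ∈ K := by
  have main : ∀ g : GL2 ℓ, (mat g).det = 1 → mat g 1 0 ≠ 0 → g ∈ K := by
    intro g hg hc
    rw [Matrix.det_fin_two] at hg
    have : g = upp ((mat g 0 0 - 1) / mat g 1 0) * low (mat g 1 0) * upp ((mat g 1 1 - 1) / mat g 1 0) := by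
      apply mat_inj
      rw [mat_mul, mat_mul, mat_upp, mat_low, mat_upp]
      ext i j; fin_cases i <;> fin_cases j <;> simp [Matrix.mul_apply, Fin.sum_univ_two]
      · field_simp; ring
      · field_simp; linear_combination -hg
      · field_simp; ring
    rw [this]
    exact K.mul_mem (K.mul_mem (hu _) (hl _)) (hu _)
  by_cases hc : mat g 1 0 = 0
  · have h1 : low 1 * g ∈ K := by
      apply main
      · rw [mat_mul, Matrix.det_mul, hg, mat_low, Matrix.det_fin_two_of]; ring
      · rw [mat_mul, mat_low]
        simp [Matrix.mul_apply, Fin.sum_univ_two, hc]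
        intro h0
        apply mat_det_ne g
        rw [Matrix.det_fin_two, h0, hc]; ring
    have := K.mul_mem (K.inv_mem (hl 1)) h1
    rwa [inv_mul_cancel_left] at this
  · exact main g hg hc

lemma exists_compl {v : Fin 2 → ZMod ℓ} (hv : v ≠ 0) : ∃ w : Fin 2 → ZMod ℓ, v 0 * w 1 - v 1 * w 0 ≠ 0 := by
  by_cases h : v 0 = 0
  · refine ⟨![1, 0], ?_⟩
    simp
    intro h1
    apply hv
    ext i; fin_cases i
    · exact h
    · exact h1
  · exact ⟨![0, 1], by simpa using h⟩

/-- change of basis taking `v, w` to the standard basis -/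
lemma exists_basis {v w : Fin 2 → ZMod ℓ} (hD : v 0 * w 1 - v 1 * w 0 ≠ 0) :
    ∃ x : GL2 ℓ, mat x *ᵥ v = ![1, 0] ∧ mat x *ᵥ w = ![0, 1] ∧ mat x⁻¹ *ᵥ ![1, 0] = v ∧
      mat x⁻¹ *ᵥ ![0, 1] = w := by
  let q : GL2 ℓ := GeneralLinearGroup.mkOfDetNeZero !![v 0, w 0; v 1, w 1]
    (by rw [Matrix.det_fin_two_of]; intro h; apply hD; linear_combination h)
  have hq : mat q = !![v 0, w 0; v 1, w 1] := rfl
  have h1 : mat q *ᵥ ![1, 0] = v := by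
    rw [hq]; ext i; fin_cases i <;> simp [Matrix.mulVec, dotProduct, Fin.sum_univ_two]
  have h2 : mat q *ᵥ ![0, 1] = w := by
    rw [hq]; ext i; fin_cases i <;> simp [Matrix.mulVec, dotProduct, Fin.sum_univ_two]
  have hqq : mat q⁻¹ * mat q = 1 := by rw [← mat_mul, inv_mul_cancel, mat_one]
  refine ⟨q⁻¹, ?_, ?_, by rw [inv_inv, h1], by rw [inv_inv, h2]⟩
  · rw [← h1, Matrix.mulVec_mulVec, hqq, Matrix.one_mulVec]
  · rw [← h2, Matrix.mulVec_mulVec, hqq, Matrix.one_mulVec]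

lemma parallel {v w : Fin 2 → ZMod ℓ} (hv : v ≠ 0) (h : v 0 * w 1 - v 1 * w 0 = 0) :
    ∃ a : ZMod ℓ, w = a • v := by
  by_cases h0 : v 0 = 0
  · have h1 : v 1 ≠ 0 := by
      intro h1; apply hv; ext i; fin_cases i
      · exact h0
      · exact h1
    refine ⟨w 1 / v 1, ?_⟩
    ext i; fin_cases i
    · rw [h0] at h; simp [h1] at h; simp [h, h0]
    · simp; field_simp
  · refine ⟨w 0 / v 0, ?_⟩
    ext i; fin_cases i
    · simp; field_simp
    · simp; field_simp; linear_combination h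

theorem dvd_case (G : Subgroup (GL2 ℓ)) (hG : ℓ ∣ Nat.card G) :
      (∃ x : GL2 ℓ, ∀ g ∈ G, IsUpperTri (x * g * x⁻¹)) ∨
        (∀ g : GL2 ℓ, (mat g).det = 1 → g ∈ G) := by
  obtain ⟨⟨u, hu⟩, huo⟩ := exists_prime_orderOf_dvd_card' ℓ hG
  rw [Subgroup.orderOf_mk] at huo
  have hfix : ∀ u : GL2 ℓ, orderOf u = ℓ → ∃ v : Fin 2 → ZMod ℓ, v ≠ 0 ∧ mat u *ᵥ v = v := by
    intro u h
    obtain ⟨h1, h2, -⟩ := unip h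
    obtain ⟨v, hv, h⟩ := exists_eigen (M := mat u) (a := 1) (by rw [h1, h2]; ring)
    exact ⟨v, hv, by rw [h, one_smul]⟩
  have hconj : ∀ x u : GL2 ℓ, orderOf u = ℓ → orderOf (x * u * x⁻¹) = ℓ := by
    intro x u h
    exact (orderOf_injective (MulAut.conj x).toMonoidHom (MulAut.conj x).injective u).trans h
  obtain ⟨v, hv, huv⟩ := hfix u huo
  by_cases hall : ∀ u' ∈ G, orderOf u' = ℓ → mat u' *ᵥ v = v
  · left
    obtain ⟨w, hw⟩ := exists_compl hv
    obtain ⟨x, hx1, -, hx3, -⟩ := exists_basis hw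
    refine ⟨x, fun g hg => ?_⟩
    have h1 := hall (g⁻¹ * u * g⁻¹⁻¹) (G.mul_mem (G.mul_mem (G.inv_mem hg) hu) (G.inv_mem (G.inv_mem hg)))
      (hconj _ _ huo)
    rw [inv_inv] at h1
    have h2 : mat u *ᵥ (mat g *ᵥ v) = mat g *ᵥ v := by
      conv_rhs => rw [← h1]
      rw [Matrix.mulVec_mulVec, Matrix.mulVec_mulVec, ← mat_mul, ← mat_mul]
      congr 2
      group
    have h3 : v 0 * (mat g *ᵥ v) 1 - v 1 * (mat g *ᵥ v) 0 = 0 := by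
      by_contra hne
      apply (unip huo).2.2
      apply ext_of_basis hne
      · rw [huv, Matrix.one_mulVec]
      · rw [h2, Matrix.one_mulVec]
    obtain ⟨a, ha⟩ := parallel hv h3
    have h4 : mat (x * g * x⁻¹) *ᵥ ![1, 0] = a • ![1, 0] := by
      rw [mat_mul, mat_mul, ← Matrix.mulVec_mulVec, ← Matrix.mulVec_mulVec, hx3, ha, Matrix.mulVec_smul, hx1]
    have h5 := congrFun h4 1
    simp [Matrix.mulVec, dotProduct, Fin.sum_univ_two] at h5
    exact h5
  · right
    push Not at hall
    obtain ⟨u', hu', huo', hne⟩ := hall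
    obtain ⟨w, hw, huw⟩ := hfix u' huo'
    have hD : v 0 * w 1 - v 1 * w 0 ≠ 0 := by
      intro h0
      have h0' : w 0 * v 1 - w 1 * v 0 = 0 := by linear_combination -h0
      obtain ⟨a, ha⟩ := parallel hw h0'
      apply hne
      rw [ha, Matrix.mulVec_smul, huw]
    obtain ⟨x, hx1, hx2, hx3, hx4⟩ := exists_basis hD
    let K : Subgroup (GL2 ℓ) := G.map (MulAut.conj x).toMonoidHom
    have hK : ∀ g, x * g * x⁻¹ ∈ K ↔ g ∈ G := by
      intro g
      exact Subgroup.mem_map_iff_mem (f := (MulAut.conj x).toMonoidHom) (MulAut.conj x).injective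
    obtain ⟨a, ha0, ha⟩ : ∃ a, a ≠ 0 ∧ x * u * x⁻¹ = upp a := by
      obtain ⟨h1, -, h3⟩ := unip (hconj x u huo)
      have h4 : mat (x * u * x⁻¹) *ᵥ ![1, 0] = ![1, 0] := by
        rw [mat_mul, mat_mul, ← Matrix.mulVec_mulVec, ← Matrix.mulVec_mulVec, hx3, huv, hx1]
      have e0 := congrFun h4 0
      have e1 := congrFun h4 1
      simp [Matrix.mulVec, dotProduct, Fin.sum_univ_two] at e0 e1
      rw [Matrix.trace_fin_two] at h1
      have e2 : mat (x * u * x⁻¹) 1 1 = 1 := by linear_combination h1 - e0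
      have e3 : mat (x * u * x⁻¹) = !![1, mat (x * u * x⁻¹) 0 1; 0, 1] := by
        ext i j; fin_cases i <;> fin_cases j <;> simp [e0, e1, e2]
      refine ⟨mat (x * u * x⁻¹) 0 1, ?_, mat_inj e3⟩
      intro h0
      apply h3
      rw [e3, h0]
      ext i j; fin_cases i <;> fin_cases j <;> simp
    obtain ⟨b, hb0, hb⟩ : ∃ a, a ≠ 0 ∧ x * u' * x⁻¹ = low a := by
      obtain ⟨h1, -, h3⟩ := unip (hconj x u' huo')
      have h4 : mat (x * u' * x⁻¹) *ᵥ ![0, 1] = ![0, 1] := by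
        rw [mat_mul, mat_mul, ← Matrix.mulVec_mulVec, ← Matrix.mulVec_mulVec, hx4, huw, hx2]
      have e0 := congrFun h4 0
      have e1 := congrFun h4 1
      simp [Matrix.mulVec, dotProduct, Fin.sum_univ_two] at e0 e1
      rw [Matrix.trace_fin_two] at h1
      have e2 : mat (x * u' * x⁻¹) 0 0 = 1 := by linear_combination h1 - e1
      have e3 : mat (x * u' * x⁻¹) = !![1, 0; mat (x * u' * x⁻¹) 1 0, 1] := by
        ext i j; fin_cases i <;> fin_cases j <;> simp [e0, e1, e2]
      refine ⟨mat (x * u' * x⁻¹) 1 0, ?_, mat_inj e3⟩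
      intro h0
      apply h3
      rw [e3, h0]
      ext i j; fin_cases i <;> fin_cases j <;> simp
    intro g hg
    rw [← hK]
    apply sl_mem (upp_mem ha0 (ha ▸ (hK u).2 hu)) (low_mem hb0 (hb ▸ (hK u').2 hu'))
    have hxx : mat x⁻¹ * mat x = 1 := by rw [← mat_mul, inv_mul_cancel, mat_one]
    rw [mat_mul, Matrix.det_mul_comm, mat_mul, ← Matrix.mul_assoc, hxx, Matrix.one_mul, hg]

end unip
end Dickson

/-- Dickson's classification of subgroups of `GL₂(F_ℓ)`. -/
theorem dickson_classification
    {ℓ : ℕ} [Fact ℓ.Prime] (hℓ : ℓ ≠ 2)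
    (δ : ZMod ℓ) (hδ : ¬ IsSquare δ) (G : Subgroup (GL2 ℓ)) :
    ((ℓ ∣ Nat.card G) →
      (∃ x : GL2 ℓ, ∀ g ∈ G, IsUpperTri (x * g * x⁻¹)) ∨
        (∀ g : GL2 ℓ, (mat g).det = 1 → g ∈ G)) ∧
    (¬ (ℓ ∣ Nat.card G) →
      (IsCyclic ↥(projImage G) ∧
        ((∃ x : GL2 ℓ, ∀ g ∈ G, InCsp (x * g * x⁻¹)) ∨
         (∃ x : GL2 ℓ, ∀ g ∈ G, InCns δ (x * g * x⁻¹)))) ∨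
      (IsDihedralSub (projImage G) ∧
        ((∃ x : GL2 ℓ, (∀ g ∈ G, InNsp (x * g * x⁻¹)) ∧ ¬ (∀ g ∈ G, InCsp (x * g * x⁻¹))) ∨
         (∃ x : GL2 ℓ, (∀ g ∈ G, InNns δ (x * g * x⁻¹)) ∧
            ¬ (∀ g ∈ G, InCns δ (x * g * x⁻¹))))) ∨
      (IsA4 (projImage G) ∨ IsS4 (projImage G) ∨ IsA5 (projImage G))) := by 
  exact ⟨Dickson.dvd_case G, Dickson.prime_case hℓ δ hδ G⟩
end

section
/- Let ℓ > 5 be a prime. Any two subgroups of PGL₂(F_ℓ) isomorphic to A₄ are conjugate in PGL₂(F_ℓ); likewise any two subgroups isomorphic to S₄ are conjugate, and any two subgroups isomorphic to A₅ are conjugate. -/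
open Matrix

theorem lemN {F : Type*} [Field F] {a b c a' b' c' d : F} (h1 : b = 1 + a + c) (h1' : b' = 1 + a' + c')
  (h2 : a^2+b*c = -d) (h2' : a'^2+b'*c' = -d) (h3 : 3*d ≠ 1) :
  ∃ p q : F, p^2+p*q+q^2 ≠ 0 ∧ p*(a-a') = q*(b'+c) ∧ p*(c-c') = -q*(a+a'+c) := by
  have key : ∀ p q : F, q ≠ 0 → p*(a-a') = q*(b'+c) → p*(c-c') = -q*(a+a'+c) → p^2+p*q+q^2 ≠ 0 := by
    intro p q hq e1 e2 hN
    obtain ⟨w, rfl⟩ : ∃ w, p = w * q := ⟨p/q, by field_simp⟩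
    have hw : w^2+w+1 = 0 := by
      have : q^2*(w^2+w+1) = 0 := by linear_combination hN
      simpa [hq] using this
    have e1' : w*(a-a') = b'+c := mul_left_cancel₀ hq (by linear_combination e1)
    have e2' : w*(c-c') = -(a+a'+c) := mul_left_cancel₀ hq (by linear_combination e2)
    have e3 : c - 2*a*w - b*w^2 = 0 := by grind
    apply h3
    grind
  by_cases ha : a = a'
  · by_cases hc : c = c'
    · exact ⟨1, 0, by simp, by simp [ha], by simp [hc]⟩
    · have : b' + c = 0 := by
        have : (c - c')*(b'+c) = 0 := by grind
        have h0 : c - c' ≠ 0 := sub_ne_zero.2 hc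
        simpa [h0] using this
      have hq : c' - c ≠ 0 := sub_ne_zero.2 (Ne.symm hc)
      have A : (a+a'+c)*(a-a') = (c'-c)*(b'+c) := by grind
      have B : (a+a'+c)*(c-c') = -(c'-c)*(a+a'+c) := by ring
      exact ⟨a+a'+c, c'-c, key _ _ hq A B, A, B⟩
  · have hq : a - a' ≠ 0 := sub_ne_zero.2 ha
    have A : (b'+c)*(a-a') = (a-a')*(b'+c) := by ring
    have B : (b'+c)*(c-c') = -(a-a')*(a+a'+c) := by grind
    exact ⟨b'+c, a-a', key _ _ hq A B, A, B⟩

lemma trace_2 {F : Type*} [Field F] (M : Matrix (Fin 2) (Fin 2) F) : M.trace = M 0 0 + M 1 1 :=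
  Matrix.trace_fin_two M

def compC (F : Type*) [Field F] : GL (Fin 2) F :=
  Matrix.GeneralLinearGroup.mkOfDetNeZero !![0, -1; 1, 1] (by simp)

lemma mem_cen {F : Type*} [Field F] (g : GL (Fin 2) F) :
    g ∈ Subgroup.center (GL (Fin 2) F) ↔ (g.val 0 1 = 0 ∧ g.val 1 0 = 0 ∧ g.val 0 0 = g.val 1 1) := by
  rw [Matrix.GeneralLinearGroup.mem_center_iff_val_mem_range_scalar]
  constructor
  · rintro ⟨c, hc⟩
    rw [← hc]; simp
  · rintro ⟨h1, h2, h3⟩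
    refine ⟨g.val 0 0, ?_⟩
    ext i j
    fin_cases i <;> fin_cases j <;> simp [h1, h2, h3]

lemma comp_conj {F : Type*} [Field F] (Y : GL (Fin 2) F) (ht : Y.val 0 0 + Y.val 1 1 = 1)
    (hd : Y.val.det = 1) (hs : Y ∉ Subgroup.center (GL (Fin 2) F)) :
    ∃ Q : GL (Fin 2) F, Q * compC F = Y * Q := by
  rw [Matrix.det_fin_two] at hd
  rw [mem_cen] at hs
  have main : ∀ u v : F, (u * (Y.val 1 0 * u + Y.val 1 1 * v) - (Y.val 0 0 * u + Y.val 0 1 * v) * v) ≠ 0 →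
      ∃ Q : GL (Fin 2) F, Q * compC F = Y * Q := by
    intro u v h
    refine ⟨Matrix.GeneralLinearGroup.mkOfDetNeZero
      !![u, Y.val 0 0 * u + Y.val 0 1 * v; v, Y.val 1 0 * u + Y.val 1 1 * v] (by
        rw [Matrix.det_fin_two]; simpa using h), ?_⟩
    apply Units.ext
    ext i j
    fin_cases i <;> fin_cases j <;>
      simp [compC, Matrix.GeneralLinearGroup.mkOfDetNeZero, Matrix.mul_apply, Fin.sum_univ_two] <;> grind
  by_cases h1 : Y.val 1 0 = 0
  · by_cases h2 : Y.val 0 1 = 0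
    · apply main 1 1
      intro h; apply hs; refine ⟨h2, h1, ?_⟩; grind
    · apply main 0 1
      simpa using h2
  · apply main 1 0
    simpa using h1

lemma core_conj {F : Type*} [Field F] (X X' : GL (Fin 2) F) (d : F)
    (t : X.val 0 0 + X.val 1 1 = 0) (t' : X'.val 0 0 + X'.val 1 1 = 0)
    (hd : X.val.det = d) (hd' : X'.val.det = d)
    (h : (X * compC F).val.trace = 1) (h' : (X' * compC F).val.trace = 1) (h3 : 3 * d ≠ 1) :
    ∃ P : GL (Fin 2) F, P * X = X' * P ∧ P * compC F = compC F * P := by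
  rw [Matrix.det_fin_two] at hd hd'
  simp [trace_2, compC, Matrix.GeneralLinearGroup.mkOfDetNeZero, Matrix.mul_apply, Fin.sum_univ_two] at h h'
  obtain ⟨p, q, hN, e1, e2⟩ := lemN (a := X.val 0 0) (b := X.val 0 1) (c := X.val 1 0)
    (a' := X'.val 0 0) (b' := X'.val 0 1) (c' := X'.val 1 0) (d := d)
    (by grind) (by grind) (by grind) (by grind) h3
  refine ⟨Matrix.GeneralLinearGroup.mkOfDetNeZero !![p, -q; q, p + q] (by
    rw [Matrix.det_fin_two]; simp; intro hh; apply hN; linear_combination hh), ?_, ?_⟩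
  all_goals
    apply Units.ext
    ext i j
    fin_cases i <;> fin_cases j <;>
      simp [compC, Matrix.GeneralLinearGroup.mkOfDetNeZero, Matrix.mul_apply, Fin.sum_univ_two] <;> grind

lemma conj_trace {F : Type*} [Field F] (Q M : GL (Fin 2) F) :
    (Q⁻¹ * M * Q).val.trace = M.val.trace := by
  simp only [Units.val_mul]
  rw [Matrix.trace_mul_comm, ← mul_assoc, ← Units.val_mul, mul_inv_cancel]; simp

lemma conj_det {F : Type*} [Field F] (Q M : GL (Fin 2) F) :
    (Q⁻¹ * M * Q).val.det = M.val.det := by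
  simp only [Units.val_mul, Matrix.det_mul]
  rw [mul_comm, ← mul_assoc, ← Matrix.det_mul, ← Units.val_mul, mul_inv_cancel]; simp

/-- normalised lift of a pair -/
structure NormPair {F : Type*} [Field F] (X Y : GL (Fin 2) F) (d : F) : Prop where
  tX : X.val.trace = 0
  tY : Y.val.trace = 1
  dY : Y.val.det = 1
  nY : Y ∉ Subgroup.center (GL (Fin 2) F)
  dX : X.val.det = d
  tXY : (X * Y).val.trace = 1

lemma pair_conj {F : Type*} [Field F] {X Y X' Y' : GL (Fin 2) F} {d : F}
    (H : NormPair X Y d) (H' : NormPair X' Y' d) (h3 : 3 * d ≠ 1) :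
    ∃ P : GL (Fin 2) F, P * X * P⁻¹ = X' ∧ P * Y * P⁻¹ = Y' := by
  obtain ⟨Q, hQ⟩ := comp_conj Y (by rw [← trace_2, H.tY]) H.dY H.nY
  obtain ⟨Q', hQ'⟩ := comp_conj Y' (by rw [← trace_2, H'.tY]) H'.dY H'.nY
  have hc : compC F = Q⁻¹ * Y * Q := by rw [mul_assoc, ← hQ]; group
  have hc' : compC F = Q'⁻¹ * Y' * Q' := by rw [mul_assoc, ← hQ']; group
  obtain ⟨P, h1, h2⟩ := core_conj (Q⁻¹ * X * Q) (Q'⁻¹ * X' * Q') d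
    (by rw [← trace_2, conj_trace, H.tX]) (by rw [← trace_2, conj_trace, H'.tX])
    (by rw [conj_det, H.dX]) (by rw [conj_det, H'.dX])
    (by
      have : Q⁻¹ * X * Q * compC F = Q⁻¹ * (X * Y) * Q := by rw [hc]; group
      rw [this, conj_trace, H.tXY])
    (by
      have : Q'⁻¹ * X' * Q' * compC F = Q'⁻¹ * (X' * Y') * Q' := by rw [hc']; group
      rw [this, conj_trace, H'.tXY]) h3
  refine ⟨Q' * P * Q⁻¹, ?_, ?_⟩
  · have : Q' * P * Q⁻¹ * X * (Q' * P * Q⁻¹)⁻¹ = Q' * (P * (Q⁻¹ * X * Q)) * P⁻¹ * Q'⁻¹ := by group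
    rw [this, h1]; group
  · have : Q' * P * Q⁻¹ * Y * (Q' * P * Q⁻¹)⁻¹ = Q' * (P * (Q⁻¹ * Y * Q)) * P⁻¹ * Q'⁻¹ := by group
    rw [this, ← hc, h2, hc']; group

/-- if `M ^ 2` is scalar then ... -/
lemma sq_cen {F : Type*} [Field F] (M : GL (Fin 2) F) (hn : M ∉ Subgroup.center (GL (Fin 2) F)) :
    M ^ 2 ∈ Subgroup.center (GL (Fin 2) F) ↔ M.val.trace = 0 := by
  rw [mem_cen] at hn ⊢
  simp only [pow_succ, pow_zero, one_mul, Units.val_mul, Matrix.mul_apply, Fin.sum_univ_two, trace_2]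
  generalize M.val 0 0 = a at *
  generalize M.val 0 1 = b at *
  generalize M.val 1 0 = c at *
  generalize M.val 1 1 = d at *
  constructor
  · rintro ⟨h1, h2, h3⟩
    have e1 : b * (a + d) = 0 := by linear_combination h1
    have e2 : c * (a + d) = 0 := by linear_combination h2
    have e3 : (a - d) * (a + d) = 0 := by linear_combination h3
    by_contra h
    simp only [mul_eq_zero, h, or_false, sub_eq_zero] at e1 e2 e3
    exact hn ⟨e1, e2, e3⟩
  · intro h
    refine ⟨by linear_combination b * h, by linear_combination c * h, by linear_combination (a - d) * h⟩

lemma cube_cen {F : Type*} [Field F] (M : GL (Fin 2) F) (hn : M ∉ Subgroup.center (GL (Fin 2) F))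
    (h : M ^ 3 ∈ Subgroup.center (GL (Fin 2) F)) : M.val.trace ^ 2 = M.val.det := by
  rw [mem_cen] at hn h
  simp only [pow_succ, pow_zero, one_mul, Units.val_mul, Matrix.mul_apply, Fin.sum_univ_two, trace_2,
    Matrix.det_fin_two] at h ⊢
  generalize M.val 0 0 = a at *
  generalize M.val 0 1 = b at *
  generalize M.val 1 0 = c at *
  generalize M.val 1 1 = d at *
  obtain ⟨h1, h2, h3⟩ := h
  have e1 : b * ((a + d) * (a + d) - (a * d - b * c)) = 0 := by linear_combination h1
  have e2 : c * ((a + d) * (a + d) - (a * d - b * c)) = 0 := by linear_combination h2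
  have e3 : (a - d) * ((a + d) * (a + d) - (a * d - b * c)) = 0 := by linear_combination h3
  by_contra h
  have h' := sub_ne_zero.2 h
  exact hn ⟨(mul_eq_zero.1 e1).resolve_right h', (mul_eq_zero.1 e2).resolve_right h',
    sub_eq_zero.1 ((mul_eq_zero.1 e3).resolve_right h')⟩

lemma five_cen {F : Type*} [Field F] (M : GL (Fin 2) F) (hn : M ∉ Subgroup.center (GL (Fin 2) F))
    (h : M ^ 5 ∈ Subgroup.center (GL (Fin 2) F)) :
    M.val.trace ^ 4 - 3 * M.val.trace ^ 2 * M.val.det + M.val.det ^ 2 = 0 := by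
  rw [mem_cen] at hn h
  simp only [pow_succ, pow_zero, one_mul, Units.val_mul, Matrix.mul_apply, Fin.sum_univ_two, trace_2,
    Matrix.det_fin_two] at h ⊢
  generalize M.val 0 0 = a at *
  generalize M.val 0 1 = b at *
  generalize M.val 1 0 = c at *
  generalize M.val 1 1 = d at *
  obtain ⟨h1, h2, h3⟩ := h
  set K := (a + d) * (a + d) * (a + d) * (a + d) - 3 * ((a + d) * (a + d)) * (a * d - b * c) +
    (a * d - b * c) * (a * d - b * c) with hK
  have e1 : b * K = 0 := by rw [hK]; linear_combination h1
  have e2 : c * K = 0 := by rw [hK]; linear_combination h2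
  have e3 : (a - d) * K = 0 := by rw [hK]; linear_combination h3
  by_contra h
  exact hn ⟨(mul_eq_zero.1 e1).resolve_right h, (mul_eq_zero.1 e2).resolve_right h,
    sub_eq_zero.1 ((mul_eq_zero.1 e3).resolve_right h)⟩

lemma trace_sq {F : Type*} [Field F] (M : GL (Fin 2) F) :
    (M ^ 2).val.trace = M.val.trace ^ 2 - 2 * M.val.det := by
  simp only [pow_succ, pow_zero, one_mul, Units.val_mul, Matrix.mul_apply, Fin.sum_univ_two, trace_2,
    Matrix.det_fin_two]
  ring

lemma det_sq {F : Type*} [Field F] (M : GL (Fin 2) F) :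
    (M ^ 2).val.det = M.val.det ^ 2 := by
  simp

lemma det_ne {F : Type*} [Field F] (M : GL (Fin 2) F) : M.val.det ≠ 0 :=
  (Matrix.isUnits_det_units M).ne_zero

section
variable {ℓ : ℕ} [Fact ℓ.Prime]

lemma toPGL_eq_one (M : GL2 ℓ) : toPGL ℓ M = 1 ↔ M ∈ Subgroup.center (GL2 ℓ) :=
  QuotientGroup.eq_one_iff M

lemma exists_scale (M : GL2 ℓ) (c : ZMod ℓ) (hc : c ≠ 0) :
    ∃ N : GL2 ℓ, N.val = c • M.val ∧ toPGL ℓ N = toPGL ℓ M := by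
  refine ⟨Matrix.GeneralLinearGroup.mkOfDetNeZero (c • M.val) ?_, rfl, ?_⟩
  · rw [Matrix.det_smul]; exact mul_ne_zero (pow_ne_zero _ hc) (det_ne M)
  · apply QuotientGroup.eq.2
    rw [mem_cen]
    have : ((Matrix.GeneralLinearGroup.mkOfDetNeZero (c • M.val)
      (by rw [Matrix.det_smul]; exact mul_ne_zero (pow_ne_zero _ hc) (det_ne M)))⁻¹ * M : GL2 ℓ)
      = Matrix.GeneralLinearGroup.mkOfDetNeZero (c⁻¹ • 1) (by simp [Matrix.det_smul, hc]) := by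
      rw [inv_mul_eq_iff_eq_mul]
      apply Units.ext
      simp [Matrix.GeneralLinearGroup.mkOfDetNeZero, smul_smul, hc]
    rw [this]
    simp [Matrix.GeneralLinearGroup.mkOfDetNeZero]

lemma not_cen {M : GL2 ℓ} {n : ℕ} (h : orderOf (toPGL ℓ M) = n) (k : ℕ) (hk : k ≠ 0) (hn : k < n) :
    M ^ k ∉ Subgroup.center (GL2 ℓ) := by
  rw [← toPGL_eq_one, map_pow]
  exact pow_ne_one_of_lt_orderOf hk (h ▸ hn)

lemma is_cen {M : GL2 ℓ} {n : ℕ} (h : orderOf (toPGL ℓ M) = n)  :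
    M ^ n ∈ Subgroup.center (GL2 ℓ) := by
  rw [← toPGL_eq_one, map_pow, ← h]
  exact pow_orderOf_eq_one _

/-- the invariant polynomial condition -/
def dCond (n : ℕ) (d : ZMod ℓ) : Prop :=
  (n = 3 ∧ d = 1) ∨ (n = 4 ∧ 2 * d = 1) ∨ (n = 5 ∧ d ^ 2 - 3 * d + 1 = 0)

lemma lift_pair (a b : PGL2 ℓ) (n : ℕ) (hn : n = 3 ∨ n = 4 ∨ n = 5) (ha : orderOf a = 2)
    (hb : orderOf b = 3) (hab : orderOf (a * b) = n) :
    ∃ (X Y : GL2 ℓ) (d : ZMod ℓ), toPGL ℓ X = a ∧ toPGL ℓ Y = b ∧ NormPair X Y d ∧ d ≠ 0 ∧ dCond n d := by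
  obtain ⟨X, rfl⟩ := QuotientGroup.mk'_surjective _ a
  obtain ⟨Y, rfl⟩ := QuotientGroup.mk'_surjective _ b
  change orderOf (toPGL ℓ X) = 2 at ha
  change orderOf (toPGL ℓ Y) = 3 at hb
  change orderOf (toPGL ℓ X * toPGL ℓ Y) = n at hab
  change ∃ (X' Y' : GL2 ℓ) (d : ZMod ℓ), toPGL ℓ X' = toPGL ℓ X ∧ toPGL ℓ Y' = toPGL ℓ Y ∧ _
  have hY := cube_cen Y (by simpa using not_cen hb 1 (by norm_num) (by norm_num)) (is_cen hb)
  have hY0 : Y.val.trace ≠ 0 := by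
    intro h; rw [h] at hY; exact det_ne Y (by rw [← hY]; simp)
  obtain ⟨Y', hY', hYY⟩ := exists_scale Y (Y.val.trace)⁻¹ (inv_ne_zero hY0)
  rw [← hYY] at hb hab ⊢
  have tY : Y'.val.trace = 1 := by rw [hY', Matrix.trace_smul]; simp [hY0]
  have hnY := not_cen hb 1 (by norm_num) (by norm_num)
  have hnX := not_cen ha 1 (by norm_num) (by norm_num)
  rw [pow_one] at hnY hnX
  have dY : Y'.val.det = 1 := by rw [← cube_cen Y' hnY (is_cen hb), tY]; simp
  clear hY' hYY hY hY0
  have tXY : (X * Y').val.trace ≠ 0 := by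
    rw [← map_mul] at hab
    intro h
    rw [← sq_cen _ (by simpa using not_cen hab 1 (by norm_num) (by omega))] at h
    exact not_cen hab 2 (by norm_num) (by omega) h
  obtain ⟨X', hX', hXX⟩ := exists_scale X (X * Y').val.trace⁻¹ (inv_ne_zero tXY)
  have tX : X.val.trace = 0 := (sq_cen X hnX).1 (is_cen ha)
  have tXY' : (X' * Y').val.trace = 1 := by
    rw [Units.val_mul, hX', Matrix.smul_mul, Matrix.trace_smul, ← Units.val_mul, smul_eq_mul, inv_mul_cancel₀ tXY]
  rw [← hXX] at hab ha ⊢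
  rw [← map_mul] at hab
  have hd : (X' * Y').val.det = X'.val.det := by rw [Units.val_mul, Matrix.det_mul, dY, mul_one]
  refine ⟨X', Y', X'.val.det, rfl, rfl, ⟨?_, tY, dY, hnY, rfl, tXY'⟩, det_ne _, ?_⟩
  · rw [hX', Matrix.trace_smul, tX]; simp
  · have hn1 := not_cen hab 1 (by norm_num) (by omega)
    rw [pow_one] at hn1
    rcases hn with rfl | rfl | rfl
    · left
      have := cube_cen _ hn1 (is_cen hab)
      rw [tXY', hd] at this
      exact ⟨rfl, by rw [← this]; simp⟩
    · right; left
      refine ⟨rfl, ?_⟩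
      have hh := (sq_cen _ (not_cen hab 2 (by norm_num) (by norm_num))).1 (by
        rw [← pow_mul]; exact is_cen hab)
      rw [trace_sq, tXY', hd] at hh
      linear_combination -hh
    · right; right
      refine ⟨rfl, ?_⟩
      have := five_cen _ hn1 (is_cen hab)
      rw [tXY', hd] at this
      linear_combination this

lemma three_d {n : ℕ} {d : ZMod ℓ} (hℓ : 5 < ℓ) (hd : d ≠ 0) (h : dCond n d) : 3 * d ≠ 1 := by
  intro h3
  rcases h with ⟨-, h⟩ | ⟨-, h⟩ | ⟨-, h⟩
  · have h2 : ((2 : ℕ) : ZMod ℓ) = 0 := by push_cast; linear_combination h3 - 3 * h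
    rw [ZMod.natCast_eq_zero_iff] at h2
    have := Nat.le_of_dvd (by norm_num) h2
    omega
  · apply hd; linear_combination h3 - h
  · have : d ^ 2 = 0 := by linear_combination h + h3
    exact hd (by simpa using this)

lemma conj_of_d {a b a' b' : PGL2 ℓ} {X Y X' Y' : GL2 ℓ} {d : ZMod ℓ}
    (hX : toPGL ℓ X = a) (hY : toPGL ℓ Y = b) (hX' : toPGL ℓ X' = a') (hY' : toPGL ℓ Y' = b')
    (H : NormPair X Y d) (H' : NormPair X' Y' d) (h3 : 3 * d ≠ 1) :
    ∃ g : PGL2 ℓ, g * a * g⁻¹ = a' ∧ g * b * g⁻¹ = b' := by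
  obtain ⟨P, h1, h2⟩ := pair_conj H H' h3
  refine ⟨toPGL ℓ P, ?_, ?_⟩
  · rw [← hX, ← hX', ← h1]; simp
  · rw [← hY, ← hY', ← h2]; simp

/-- The case of angles 3 or 4. -/
lemma conj34 (hℓ : 5 < ℓ) {a b a' b' : PGL2 ℓ} {n : ℕ} (hn : n = 3 ∨ n = 4)
    (ha : orderOf a = 2) (hb : orderOf b = 3) (hab : orderOf (a * b) = n)
    (ha' : orderOf a' = 2) (hb' : orderOf b' = 3) (hab' : orderOf (a' * b') = n) :
    ∃ g : PGL2 ℓ, g * a * g⁻¹ = a' ∧ g * b * g⁻¹ = b' := by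
  obtain ⟨X, Y, d, hX, hY, H, hd0, hd⟩ := lift_pair a b n (by tauto) ha hb hab
  obtain ⟨X', Y', d', hX', hY', H', hd0', hd'⟩ := lift_pair a' b' n (by tauto) ha' hb' hab'
  have h3 := three_d hℓ hd0 hd
  have : d' = d := by
    rcases hn with rfl | rfl
    · simp [dCond] at hd hd'
      rw [hd, hd']
    · simp [dCond] at hd hd'
      linear_combination d * hd' - d' * hd
  subst this
  exact conj_of_d hX hY hX' hY' H H' h3

lemma mul_scale {M N : GL2 ℓ} (h : toPGL ℓ M = toPGL ℓ N) : ∃ c : ZMod ℓ, M.val = c • N.val := by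
  have h := QuotientGroup.eq.1 h.symm
  rw [Matrix.GeneralLinearGroup.mem_center_iff_val_mem_range_scalar] at h
  obtain ⟨c, hc⟩ := h
  refine ⟨c, ?_⟩
  have : M = N * (N⁻¹ * M) := by group
  rw [this, Units.val_mul, ← hc]
  ext i j
  simp [mul_comm]

lemma conj5 (hℓ : 5 < ℓ) {a b a' b' a'' b'' : PGL2 ℓ}
    (ha : orderOf a = 2) (hb : orderOf b = 3) (hab : orderOf (a * b) = 5)
    (ha' : orderOf a' = 2) (hb' : orderOf b' = 3) (hab' : orderOf (a' * b') = 5)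
    (ha'' : orderOf a'' = 2) (hb'' : orderOf b'' = 3) (hab'' : orderOf (a'' * b'') = 5)
    (hsq : a'' * b'' = (a' * b') ^ 2) :
    (∃ g : PGL2 ℓ, g * a * g⁻¹ = a' ∧ g * b * g⁻¹ = b') ∨
    (∃ g : PGL2 ℓ, g * a * g⁻¹ = a'' ∧ g * b * g⁻¹ = b'') := by
  obtain ⟨X, Y, d, hX, hY, H, hd0, hd⟩ := lift_pair a b 5 (by tauto) ha hb hab
  obtain ⟨X', Y', d', hX', hY', H', hd0', hd'⟩ := lift_pair a' b' 5 (by tauto) ha' hb' hab'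
  obtain ⟨X'', Y'', d'', hX'', hY'', H'', hd0'', hd''⟩ := lift_pair a'' b'' 5 (by tauto) ha'' hb'' hab''
  have h3 := three_d hℓ hd0 hd
  by_cases h : d' = d
  · subst h
    exact Or.inl (conj_of_d hX hY hX' hY' H H' h3)
  · right
    have h2 : toPGL ℓ (X'' * Y'') = toPGL ℓ ((X' * Y') ^ 2) := by
      rw [map_mul, map_pow, map_mul, hX', hX'', hY', hY'', hsq]
    obtain ⟨c, hc⟩ := mul_scale h2
    have ht := congrArg Matrix.trace hc
    have hdt := congrArg Matrix.det hc
    rw [Matrix.trace_smul, trace_sq, H''.tXY, H'.tXY, Units.val_mul, Matrix.det_mul, H'.dX, H'.dY, smul_eq_mul] at ht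
    rw [Matrix.det_smul, det_sq, Units.val_mul, Units.val_mul, Matrix.det_mul, Matrix.det_mul, H'.dX, H'.dY,
      H''.dX, H''.dY] at hdt
    simp [dCond] at hd hd' hd'' ht hdt
    have hs : d + d' = 3 := by
      have : (d' - d) * (d + d' - 3) = 0 := by linear_combination hd' - hd
      simpa [sub_ne_zero.2 h, sub_eq_zero] using this
    have : d'' = d := by grind
    subst this
    exact conj_of_d hX hY hX'' hY'' H H'' h3

end

/-- Subgroups of index dividing two contain all elements with trivial cube. -/
lemma top_of_card {G : Type*} [Group G] [Finite G] (K : Subgroup G) (m : ℕ) (hm : 0 < m)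
    (hG : Nat.card G = 2 * m) (hK : m ∣ Nat.card K) (g : G) (hg : g ^ 3 = 1) : g ∈ K := by
  have h1 := K.card_mul_index
  obtain ⟨k, hk⟩ := hK
  rw [hk, hG, mul_assoc, mul_comm 2 m] at h1
  have h2 : k * K.index = 2 := Nat.eq_of_mul_eq_mul_left hm h1
  have h3 : K.index ∣ 2 := ⟨k, by rw [mul_comm]; exact h2.symm⟩
  rcases (Nat.dvd_prime Nat.prime_two).1 h3 with h | h
  · rw [Subgroup.index_eq_one.1 h]; trivial
  · have := K.sq_mem_of_index_two h (g ^ 2)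
    have e : (g ^ 2) ^ 2 = g := by rw [← pow_mul]; change g ^ (3 + 1) = g; rw [pow_succ, hg, one_mul]
    rwa [e] at this

lemma dvd_card {G : Type*} [Group G] (K : Subgroup G) {g : G} (hg : g ∈ K) {n : ℕ} (h : orderOf g = n) :
    n ∣ Nat.card K := by
  have := orderOf_dvd_natCard (⟨g, hg⟩ : K)
  rwa [Subgroup.orderOf_mk, h] at this

lemma alt_top {n : ℕ} (K : Subgroup (alternatingGroup (Fin n)))
    (h : ∀ g : alternatingGroup (Fin n), g ^ 3 = 1 → g ∈ K) : K = ⊤ := by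
  have h1 : alternatingGroup (Fin n) ≤ K.map (alternatingGroup (Fin n)).subtype := by
    refine le_trans (Equiv.Perm.closure_three_cycles_eq_alternating (α := Fin n)).ge ?_
    rw [Subgroup.closure_le]
    intro g hg
    refine ⟨⟨g, Equiv.Perm.IsThreeCycle.mem_alternatingGroup hg⟩, h _ ?_, rfl⟩
    apply Subtype.ext
    simp only [Subgroup.coe_pow, Subgroup.coe_one]
    rw [← Equiv.Perm.IsThreeCycle.orderOf hg]
    exact pow_orderOf_eq_one _
  rw [eq_top_iff]
  intro g _
  obtain ⟨k, hk, e⟩ := h1 g.2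
  have : k = g := Subtype.ext e
  rwa [← this]

lemma ord_of {G : Type*} [Group G] {g : G} {n : ℕ} [Fact n.Prime] (h : g ^ n = 1) (h1 : g ≠ 1) : orderOf g = n :=
  orderOf_eq_prime h h1

abbrev alt (n : ℕ) := alternatingGroup (Fin n)

lemma gen_alt {n m k : ℕ} (hm : 0 < m) (hG : Nat.card (alt n) = 2 * m) {x y : alt n}
    (hx : orderOf x = 2) (hy : orderOf y = 3) (hxy : orderOf (x * y) = k)
    (hmm : ∀ c, 2 ∣ c → 3 ∣ c → k ∣ c → m ∣ c) : Subgroup.closure {x, y} = ⊤ := by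
  have hx' : x ∈ Subgroup.closure {x, y} := Subgroup.subset_closure (by simp)
  have hy' : y ∈ Subgroup.closure {x, y} := Subgroup.subset_closure (by simp)
  apply alt_top
  intro g hg
  exact top_of_card _ m hm hG (hmm _ (dvd_card _ hx' hx) (dvd_card _ hy' hy)
    (dvd_card _ (mul_mem hx' hy') hxy)) g hg

lemma A4_data : ∃ x y : alt 4, orderOf x = 2 ∧ orderOf y = 3 ∧ orderOf (x * y) = 3 ∧
    Subgroup.closure {x, y} = ⊤ := by
  let x : alt 4 := ⟨Equiv.swap 0 1 * Equiv.swap 2 3, Equiv.Perm.mem_alternatingGroup.2 (by decide)⟩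
  let y : alt 4 := ⟨Equiv.swap 1 2 * Equiv.swap 2 3, Equiv.Perm.mem_alternatingGroup.2 (by decide)⟩
  have hx : orderOf x = 2 := orderOf_eq_prime (by decide) (by decide)
  have hy : orderOf y = 3 := orderOf_eq_prime (by decide) (by decide)
  have hxy : orderOf (x * y) = 3 := orderOf_eq_prime (by decide) (by decide)
  refine ⟨x, y, hx, hy, hxy, gen_alt (m := 6) (by norm_num) ?_ hx hy hxy ?_⟩
  · rw [nat_card_alternatingGroup]; simp [Nat.factorial]
  · intro c h1 h2 _; omega

lemma A5_data : ∃ x y x' y' : alt 5, orderOf x = 2 ∧ orderOf y = 3 ∧ orderOf (x * y) = 5 ∧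
    orderOf x' = 2 ∧ orderOf y' = 3 ∧ orderOf (x' * y') = 5 ∧ x' * y' = (x * y) ^ 2 ∧
    Subgroup.closure {x, y} = ⊤ ∧ Subgroup.closure {x', y'} = ⊤ := by
  let x : alt 5 := ⟨Equiv.swap 1 2 * Equiv.swap 3 4, Equiv.Perm.mem_alternatingGroup.2 (by decide)⟩
  let y : alt 5 := ⟨Equiv.swap 0 2 * Equiv.swap 2 4, Equiv.Perm.mem_alternatingGroup.2 (by decide)⟩
  let x' : alt 5 := ⟨Equiv.swap 1 3 * Equiv.swap 2 4, Equiv.Perm.mem_alternatingGroup.2 (by decide)⟩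
  let y' : alt 5 := ⟨Equiv.swap 0 4 * Equiv.swap 4 3, Equiv.Perm.mem_alternatingGroup.2 (by decide)⟩
  have : Fact (Nat.Prime 5) := ⟨by norm_num⟩
  have hx : orderOf x = 2 := orderOf_eq_prime (by decide) (by decide)
  have hy : orderOf y = 3 := orderOf_eq_prime (by decide) (by decide)
  have hxy : orderOf (x * y) = 5 := orderOf_eq_prime (by decide) (by decide)
  have hx' : orderOf x' = 2 := orderOf_eq_prime (by decide) (by decide)
  have hy' : orderOf y' = 3 := orderOf_eq_prime (by decide) (by decide)
  have hxy' : orderOf (x' * y') = 5 := orderOf_eq_prime (by decide) (by decide)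
  have hc : Nat.card (alt 5) = 2 * 30 := by rw [nat_card_alternatingGroup]; simp [Nat.factorial]
  refine ⟨x, y, x', y', hx, hy, hxy, hx', hy', hxy', by decide,
    gen_alt (m := 30) (by norm_num) hc hx hy hxy ?_, gen_alt (m := 30) (by norm_num) hc hx' hy' hxy' ?_⟩
  · intro c h1 h2 _; omega
  · intro c h1 h2 _; omega

lemma S4_data : ∃ x y : Equiv.Perm (Fin 4), orderOf x = 2 ∧ orderOf y = 3 ∧ orderOf (x * y) = 4 ∧
    Subgroup.closure {x, y} = ⊤ := by
  let x : Equiv.Perm (Fin 4) := Equiv.swap 2 3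
  let y : Equiv.Perm (Fin 4) := Equiv.swap 0 1 * Equiv.swap 1 2
  have hx : orderOf x = 2 := orderOf_eq_prime (by decide) (by decide)
  have hy : orderOf y = 3 := orderOf_eq_prime (by decide) (by decide)
  have hxy : orderOf (x * y) = 4 :=
    orderOf_eq_prime_pow (p := 2) (n := 1) (by decide) (by decide)
  have hx' : x ∈ Subgroup.closure {x, y} := Subgroup.subset_closure (by simp)
  have hy' : y ∈ Subgroup.closure {x, y} := Subgroup.subset_closure (by simp)
  refine ⟨x, y, hx, hy, hxy, ?_⟩
  have h3 : ∀ g : Equiv.Perm (Fin 4), g ^ 3 = 1 → g ∈ Subgroup.closure {x, y} := by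
    intro g hg
    refine top_of_card _ 12 (by norm_num) ?_ ?_ g hg
    · rw [Nat.card_perm]; simp [Nat.factorial]
    · have h1 := dvd_card _ hy' hy
      have h2 := dvd_card _ (mul_mem hx' hy') hxy
      omega
  have hA : alternatingGroup (Fin 4) ≤ Subgroup.closure {x, y} := by
    rw [← Equiv.Perm.closure_three_cycles_eq_alternating, Subgroup.closure_le]
    intro g hg
    apply h3
    rw [← Equiv.Perm.IsThreeCycle.orderOf hg]
    exact pow_orderOf_eq_one _
  rw [eq_top_iff]
  intro g _
  rcases Int.units_eq_one_or (Equiv.Perm.sign g) with h | h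
  · exact hA h
  · have h4 : x * g ∈ Subgroup.closure {x, y} := hA (by
      rw [Equiv.Perm.mem_alternatingGroup, map_mul, h, Equiv.Perm.sign_swap (by decide)]; rfl)
    exact (Subgroup.mul_mem_cancel_left _ hx').1 h4

lemma H_eq {G P : Type*} [Group G] [Group P] {H : Subgroup P} (e : H ≃* G) {x y : G}
    (h : Subgroup.closure {x, y} = ⊤) :
    H = Subgroup.closure {(e.symm x : P), (e.symm y : P)} := by
  have h1 : Subgroup.map (H.subtype.comp e.symm.toMonoidHom) ⊤ = H := by
    rw [← Subgroup.map_map, Subgroup.map_top_of_surjective _ e.symm.surjective,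
      ← MonoidHom.range_eq_map, Subgroup.range_subtype]
  rw [← h, MonoidHom.map_closure] at h1
  rw [Set.image_pair] at h1
  exact h1.symm

lemma conj_closure {P : Type*} [Group P] {a b a' b' g : P} (h1 : g * a * g⁻¹ = a') (h2 : g * b * g⁻¹ = b') :
    Subgroup.closure {a', b'} = Subgroup.map (MulAut.conj g).toMonoidHom (Subgroup.closure {a, b}) := by
  rw [MonoidHom.map_closure, Set.image_pair]
  simp [h1, h2]

lemma ord_e {G P : Type*} [Group G] [Group P] {H : Subgroup P} (e : H ≃* G) (x : G) :
    orderOf (e.symm x : P) = orderOf x := by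
  rw [Subgroup.orderOf_coe, MulEquiv.orderOf_eq]

lemma ord_e2 {G P : Type*} [Group G] [Group P] {H : Subgroup P} (e : H ≃* G) (x y : G) :
    orderOf ((e.symm x : P) * (e.symm y : P)) = orderOf (x * y) := by
  rw [← ord_e e, map_mul, Subgroup.coe_mul]

/-- For `ℓ > 5`, any two subgroups of `PGL₂(F_ℓ)` isomorphic to `A₄`
(resp. `S₄`, resp. `A₅`) are conjugate in `PGL₂(F_ℓ)`. -/
theorem exceptional_subgroups_conjugate
    {ℓ : ℕ} [Fact ℓ.Prime] (hℓ : 5 < ℓ)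
    (H₁ H₂ : Subgroup (PGL2 ℓ))
    (h : (IsA4 H₁ ∧ IsA4 H₂) ∨ (IsS4 H₁ ∧ IsS4 H₂) ∨ (IsA5 H₁ ∧ IsA5 H₂)) :
    ∃ x : PGL2 ℓ, H₂ = Subgroup.map (MulAut.conj x).toMonoidHom H₁ := by
  rcases h with ⟨⟨e₁⟩, ⟨e₂⟩⟩ | ⟨⟨e₁⟩, ⟨e₂⟩⟩ | ⟨⟨e₁⟩, ⟨e₂⟩⟩
  · obtain ⟨x, y, hx, hy, hxy, hc⟩ := A4_data
    obtain ⟨g, h1, h2⟩ := conj34 hℓ (a := e₁.symm x) (b := e₁.symm y) (a' := e₂.symm x) (b' := e₂.symm y)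
      (n := 3) (by norm_num)
      (by rw [ord_e, hx]) (by rw [ord_e, hy]) (by rw [ord_e2, hxy])
      (by rw [ord_e, hx]) (by rw [ord_e, hy]) (by rw [ord_e2, hxy])
    have := conj_closure h1 h2
    rw [← H_eq e₁ hc, ← H_eq e₂ hc] at this
    exact ⟨g, this⟩
  · obtain ⟨x, y, hx, hy, hxy, hc⟩ := S4_data
    obtain ⟨g, h1, h2⟩ := conj34 hℓ (a := e₁.symm x) (b := e₁.symm y) (a' := e₂.symm x) (b' := e₂.symm y)
      (n := 4) (by norm_num)
      (by rw [ord_e, hx]) (by rw [ord_e, hy]) (by rw [ord_e2, hxy])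
      (by rw [ord_e, hx]) (by rw [ord_e, hy]) (by rw [ord_e2, hxy])
    have := conj_closure h1 h2
    rw [← H_eq e₁ hc, ← H_eq e₂ hc] at this
    exact ⟨g, this⟩
  · obtain ⟨x, y, x', y', hx, hy, hxy, hx', hy', hxy', hsq, hc, hc'⟩ := A5_data
    rcases conj5 hℓ (a := e₁.symm x) (b := e₁.symm y) (a' := e₂.symm x) (b' := e₂.symm y)
      (a'' := e₂.symm x') (b'' := e₂.symm y')
      (by rw [ord_e, hx]) (by rw [ord_e, hy]) (by rw [ord_e2, hxy])
      (by rw [ord_e, hx]) (by rw [ord_e, hy]) (by rw [ord_e2, hxy])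
      (by rw [ord_e, hx']) (by rw [ord_e, hy']) (by rw [ord_e2, hxy'])
      (by rw [← Subgroup.coe_mul, ← map_mul, hsq, map_pow, map_mul]; rfl)
      with ⟨g, h1, h2⟩ | ⟨g, h1, h2⟩
    · have := conj_closure h1 h2
      rw [← H_eq e₁ hc, ← H_eq e₂ hc] at this
      exact ⟨g, this⟩
    · have := conj_closure h1 h2
      rw [← H_eq e₁ hc, ← H_eq e₂ hc'] at this
      exact ⟨g, this⟩
end
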